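/- Let λ0 ∈ ℝ, let g be an exchangeable prior, and let d be a pseudo symmetric design with c_{d22} > 0, q_d(x_d) > 0 and q_d(λ0) > 0, and set π_d = q_d(λ0)/(q_d(λ0) + (t−2) q_d(x_d)). Then d is A_{g,λ0}-optimal if and only if max_{s∈S} [ π_d q_s(x_d)/q_d(x_d) + (1 − π_d) q_s(λ0)/q_d(λ0) ] = 1. Moreover, in that case every sequence s with p_s > 0 attains this maximum. -/

import Mathlib

open Matrix MeasureTheory
open scoped Classical

noncomputable section

/-- A treatment sequence: assigns a treatment in `Fin t` to each period in `Fin p`. -/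
abbrev TrtSeq (p t : ℕ) := Fin p → Fin t

/-- Treatment/period incidence matrix `T_s`. -/
def Tmat {p t : ℕ} (s : TrtSeq p t) : Matrix (Fin p) (Fin t) ℝ :=
  Matrix.of fun k i => if s k = i then 1 else 0

/-- Carryover incidence matrix `F_s`: first row zero, row `k` records the treatment
in period `k-1`. -/
def Fmat {p t : ℕ} (s : TrtSeq p t) : Matrix (Fin p) (Fin t) ℝ :=
  Matrix.of fun k i =>
    if (k : ℕ) = 0 then 0
    else if s ⟨(k : ℕ) - 1, Nat.lt_of_le_of_lt (Nat.sub_le _ _) k.isLt⟩ = i then 1 else 0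

/-- The all-ones `m × m` matrix `J_m`. -/
def Jmat (m : ℕ) : Matrix (Fin m) (Fin m) ℝ := Matrix.of fun _ _ => 1

/-- `B_t = I_t - J_t / t`. -/
def Bmat (t : ℕ) : Matrix (Fin t) (Fin t) ℝ := 1 - ((t : ℝ))⁻¹ • Jmat t

/-- `B̃ = Σ⁻¹ - Σ⁻¹ J_p Σ⁻¹ / (1_p' Σ⁻¹ 1_p)`. -/
def Btil {p : ℕ} (S : Matrix (Fin p) (Fin p) ℝ) : Matrix (Fin p) (Fin p) ℝ :=
  S⁻¹ - (((fun _ => (1 : ℝ)) : Fin p → ℝ) ⬝ᵥ (S⁻¹ *ᵥ fun _ => (1 : ℝ)))⁻¹ •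
    (S⁻¹ * Jmat p * S⁻¹)

/-- `G_1(s) = T_s`, `G_2(s) = F_s`. -/
def Gmat {p t : ℕ} (i : Fin 2) (s : TrtSeq p t) : Matrix (Fin p) (Fin t) ℝ :=
  if i = 0 then Tmat s else Fmat s

/-- An approximate design: nonnegative weights summing to one. -/
def IsDesign {p t : ℕ} (w : TrtSeq p t → ℝ) : Prop :=
  (∀ s, 0 ≤ w s) ∧ ∑ s : TrtSeq p t, w s = 1

/-- `Ĉ_{sij} = B_t G_i(s)' B̃ G_j(s) B_t`. -/
def Chat {p t : ℕ} (S : Matrix (Fin p) (Fin p) ℝ) (s : TrtSeq p t) (i j : Fin 2) :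
    Matrix (Fin t) (Fin t) ℝ :=
  Bmat t * (Gmat i s)ᵀ * Btil S * Gmat j s * Bmat t

/-- `c_{sij} = tr Ĉ_{sij}`. -/
def cseq {p t : ℕ} (S : Matrix (Fin p) (Fin p) ℝ) (s : TrtSeq p t) (i j : Fin 2) : ℝ :=
  (Chat S s i j).trace

/-- `Ĉ_{dij} = n ∑_s p_s Ĉ_{sij}`. -/
def ChatD {p t : ℕ} (n : ℕ) (S : Matrix (Fin p) (Fin p) ℝ) (w : TrtSeq p t → ℝ)
    (i j : Fin 2) : Matrix (Fin t) (Fin t) ℝ :=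
  (n : ℝ) • ∑ s : TrtSeq p t, w s • Chat S s i j

/-- `C_{dij} = Ĉ_{dij} - n (∑_s p_s G_i(s) B_t)' B̃ (∑_s p_s G_j(s) B_t)`. -/
def CD {p t : ℕ} (n : ℕ) (S : Matrix (Fin p) (Fin p) ℝ) (w : TrtSeq p t → ℝ)
    (i j : Fin 2) : Matrix (Fin t) (Fin t) ℝ :=
  ChatD n S w i j -
    (n : ℝ) • ((∑ s : TrtSeq p t, w s • (Gmat i s * Bmat t))ᵀ * Btil S *
      (∑ s : TrtSeq p t, w s • (Gmat j s * Bmat t)))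

/-- `c_{dij} = tr Ĉ_{dij} = n ∑_s p_s c_{sij}`. -/
def cD {p t : ℕ} (n : ℕ) (S : Matrix (Fin p) (Fin p) ℝ) (w : TrtSeq p t → ℝ)
    (i j : Fin 2) : ℝ :=
  (ChatD n S w i j).trace

/-- Fisher information matrix `C_{d,τ0,λ0}` for the direct treatment effects under the
proportional model. -/
def CInfo {p t : ℕ} (n : ℕ) (S : Matrix (Fin p) (Fin p) ℝ) (w : TrtSeq p t → ℝ)
    (τ0 : Fin t → ℝ) (l0 : ℝ) : Matrix (Fin t) (Fin t) ℝ :=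
  CD n S w 0 0 + l0 • (CD n S w 0 1 + CD n S w 1 0) + (l0 ^ 2) • CD n S w 1 1 -
    (τ0 ⬝ᵥ (CD n S w 1 1 *ᵥ τ0))⁻¹ •
      ((CD n S w 0 1 + l0 • CD n S w 1 1) * vecMulVec τ0 τ0 *
        (CD n S w 1 0 + l0 • CD n S w 1 1))

/-- Permutation matrix `S_σ` with `(S_σ)_{j,i} = 1` iff `i = σ j`. -/
def Smat {t : ℕ} (σ : Equiv.Perm (Fin t)) : Matrix (Fin t) (Fin t) ℝ :=
  Matrix.of fun j i => if i = σ j then 1 else 0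

/-- The relabelled sequence `σ ∘ s`. -/
def permSeq {p t : ℕ} (σ : Equiv.Perm (Fin t)) (s : TrtSeq p t) : TrtSeq p t := fun k => σ (s k)

/-- The design `σ d`, with weights `(σd)_s = p_{σ⁻¹ ∘ s}`. -/
def permDesign {p t : ℕ} (σ : Equiv.Perm (Fin t)) (w : TrtSeq p t → ℝ) : TrtSeq p t → ℝ :=
  fun s => w (permSeq σ⁻¹ s)

/-- A design is symmetric if its weights are invariant under treatment relabelling. -/
def IsSymmetricDesign {p t : ℕ} (w : TrtSeq p t → ℝ) : Prop :=
  ∀ (σ : Equiv.Perm (Fin t)) (s : TrtSeq p t), w (permSeq σ s) = w s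

/-- The symmetrized design `d*` with weights `p*_s = (1/t!) ∑_σ p_{σ⁻¹ ∘ s}`. -/
def symmetrize {p t : ℕ} (w : TrtSeq p t → ℝ) : TrtSeq p t → ℝ :=
  fun s => ((Nat.factorial t : ℝ))⁻¹ * ∑ σ : Equiv.Perm (Fin t), permDesign σ w s

/-- `q_s(x) = c_{s11} + 2 c_{s12} x + c_{s22} x²`. -/
def qSeq {p t : ℕ} (S : Matrix (Fin p) (Fin p) ℝ) (s : TrtSeq p t) (x : ℝ) : ℝ :=
  cseq S s 0 0 + 2 * cseq S s 0 1 * x + cseq S s 1 1 * x ^ 2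

/-- `q(x) = max_{s ∈ S} q_s(x)`. -/
def qMax (p t : ℕ) (S : Matrix (Fin p) (Fin p) ℝ) (x : ℝ) : ℝ :=
  sSup (Set.range fun s : TrtSeq p t => qSeq S s x)

/-- `y* = inf_x q(x)`. -/
def yStar (p t : ℕ) (S : Matrix (Fin p) (Fin p) ℝ) : ℝ := ⨅ x : ℝ, qMax p t S x

/-- `q_d(x) = ∑_s p_s q_s(x)`. -/
def qD {p t : ℕ} (S : Matrix (Fin p) (Fin p) ℝ) (w : TrtSeq p t → ℝ) (x : ℝ) : ℝ :=
  ∑ s : TrtSeq p t, w s * qSeq S s x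

/-- `x_d = -c_{d12}/c_{d22}`. -/
def xD {p t : ℕ} (n : ℕ) (S : Matrix (Fin p) (Fin p) ℝ) (w : TrtSeq p t → ℝ) : ℝ :=
  -(cD n S w 0 1) / cD n S w 1 1

/-- An exchangeable prior: a probability measure on `{τ : 1'τ = 0, τ ≠ 0}` that is
invariant under all coordinate permutations of `ℝ^t`. -/
def IsExchangeablePrior {t : ℕ} (g : Measure (Fin t → ℝ)) : Prop :=
  IsProbabilityMeasure g ∧
    g {τ : Fin t → ℝ | ¬((∑ i, τ i) = 0 ∧ τ ≠ 0)} = 0 ∧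
    ∀ σ : Equiv.Perm (Fin t), Measure.map (fun τ i => τ (σ i)) g = g

/-- `m_d(τ0) = min {ℓ' C_{d,τ0,λ0} ℓ : 1'ℓ = 0, ℓ'ℓ = 1}`. -/
def mD {p t : ℕ} (n : ℕ) (S : Matrix (Fin p) (Fin p) ℝ) (w : TrtSeq p t → ℝ) (l0 : ℝ)
    (τ0 : Fin t → ℝ) : ℝ :=
  sInf {v : ℝ | ∃ l : Fin t → ℝ, (∑ i, l i) = 0 ∧ l ⬝ᵥ l = 1 ∧
    v = l ⬝ᵥ (CInfo n S w τ0 l0 *ᵥ l)}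

/-- The E-criterion value `E_{g,λ0}(d) = ∫ m_d(τ0) g(dτ0)`. -/
def Ecrit {p t : ℕ} (n : ℕ) (S : Matrix (Fin p) (Fin p) ℝ) (g : Measure (Fin t → ℝ))
    (l0 : ℝ) (w : TrtSeq p t → ℝ) : ℝ :=
  ∫ τ0, mD n S w l0 τ0 ∂g

/-- Competing designs for E-optimality: designs with a.e. positive `τ0' C_{d22} τ0`
and `g`-integrable `m_d`. -/
def EAdmissible {p t : ℕ} (n : ℕ) (S : Matrix (Fin p) (Fin p) ℝ) (g : Measure (Fin t → ℝ))
    (l0 : ℝ) (w : TrtSeq p t → ℝ) : Prop :=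
  IsDesign w ∧ (∀ᵐ τ0 ∂g, 0 < τ0 ⬝ᵥ (CD n S w 1 1 *ᵥ τ0)) ∧
    Integrable (mD n S w l0) g

/-- `d` is `E_{g,λ0}`-optimal. -/
def EOptimal {p t : ℕ} (n : ℕ) (S : Matrix (Fin p) (Fin p) ℝ) (g : Measure (Fin t → ℝ))
    (l0 : ℝ) (w : TrtSeq p t → ℝ) : Prop :=
  ∀ w' : TrtSeq p t → ℝ, EAdmissible n S g l0 w' → Ecrit n S g l0 w' ≤ Ecrit n S g l0 w

/-- A pseudo symmetric design: treatments equireplicated in each period,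
and all `C_{dij}` completely symmetric. -/
def IsPseudoSymmetric {p t : ℕ} (n : ℕ) (S : Matrix (Fin p) (Fin p) ℝ)
    (w : TrtSeq p t → ℝ) : Prop :=
  (∀ (k : Fin p) (i : Fin t),
    (∑ s ∈ Finset.univ.filter fun s : TrtSeq p t => s k = i, w s) = 1 / (t : ℝ)) ∧
  ∀ i j : Fin 2, ∃ a b : ℝ, CD n S w i j = a • (1 : Matrix (Fin t) (Fin t) ℝ) + b • Jmat t

/-- Eigenvalues of a (Hermitian) matrix sorted increasingly with multiplicity. -/
def sortedEigs {t : ℕ} (C : Matrix (Fin t) (Fin t) ℝ) : Fin t → ℝ :=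
  if h : C.IsHermitian then (fun i => h.eigenvalues (Tuple.sort h.eigenvalues i))
  else fun _ => 0

/-- `Φ_D(C) = (∏_{i=1}^{t-1} a_i)^{1/(t-1)}` (eigenvalues sorted increasingly). -/
def PhiD {t : ℕ} (C : Matrix (Fin t) (Fin t) ℝ) : ℝ :=
  (∏ i ∈ Finset.univ.filter fun i : Fin t => (i : ℕ) ≠ 0, sortedEigs C i) ^ (((t : ℝ) - 1)⁻¹)

/-- `Φ_A(C) = (t-1)(∑_{i=1}^{t-1} a_i⁻¹)⁻¹` if `a_1 > 0`, else `0`. -/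
def PhiA {t : ℕ} (C : Matrix (Fin t) (Fin t) ℝ) : ℝ :=
  if ∀ i : Fin t, (i : ℕ) ≠ 0 → 0 < sortedEigs C i then
    ((t : ℝ) - 1) *
      (∑ i ∈ Finset.univ.filter fun i : Fin t => (i : ℕ) ≠ 0, (sortedEigs C i)⁻¹)⁻¹
  else 0

/-- `Φ_T(C) = tr(C)/(t-1)`. -/
def PhiT {t : ℕ} (C : Matrix (Fin t) (Fin t) ℝ) : ℝ := C.trace / ((t : ℝ) - 1)

/-- The criterion value `∫ Φ(C_{d,τ0,λ0}) g(dτ0)`. -/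
def PhiCrit {p t : ℕ} (n : ℕ) (S : Matrix (Fin p) (Fin p) ℝ)
    (Phi : Matrix (Fin t) (Fin t) ℝ → ℝ) (g : Measure (Fin t → ℝ)) (l0 : ℝ)
    (w : TrtSeq p t → ℝ) : ℝ :=
  ∫ τ0, Phi (CInfo n S w τ0 l0) ∂g

/-- Competing designs for a `Φ`-criterion. -/
def PhiAdmissible {p t : ℕ} (n : ℕ) (S : Matrix (Fin p) (Fin p) ℝ)
    (Phi : Matrix (Fin t) (Fin t) ℝ → ℝ) (g : Measure (Fin t → ℝ)) (l0 : ℝ)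
    (w : TrtSeq p t → ℝ) : Prop :=
  IsDesign w ∧ (∀ᵐ τ0 ∂g, 0 < τ0 ⬝ᵥ (CD n S w 1 1 *ᵥ τ0)) ∧
    Integrable (fun τ0 => Phi (CInfo n S w τ0 l0)) g

/-- `d` is `Φ_{g,λ0}`-optimal. -/
def PhiOptimal {p t : ℕ} (n : ℕ) (S : Matrix (Fin p) (Fin p) ℝ)
    (Phi : Matrix (Fin t) (Fin t) ℝ → ℝ) (g : Measure (Fin t → ℝ)) (l0 : ℝ)
    (w : TrtSeq p t → ℝ) : Prop :=
  ∀ w' : TrtSeq p t → ℝ, PhiAdmissible n S Phi g l0 w' →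
    PhiCrit n S Phi g l0 w' ≤ PhiCrit n S Phi g l0 w

/-- `H_1(s) = F_s`, `H_2(s) = T_s + λ0 F_s` (for estimating `λ`). -/
def Hmat {p t : ℕ} (l0 : ℝ) (i : Fin 2) (s : TrtSeq p t) : Matrix (Fin p) (Fin t) ℝ :=
  if i = 0 then Fmat s else Tmat s + l0 • Fmat s

/-- `Â_{sij} = B_t H_i(s)' B̃ H_j(s) B_t`. -/
def Ahat {p t : ℕ} (S : Matrix (Fin p) (Fin p) ℝ) (l0 : ℝ) (s : TrtSeq p t) (i j : Fin 2) :
    Matrix (Fin t) (Fin t) ℝ :=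
  Bmat t * (Hmat l0 i s)ᵀ * Btil S * Hmat l0 j s * Bmat t

/-- `h_{sij} = tr Â_{sij}`. -/
def hseq {p t : ℕ} (S : Matrix (Fin p) (Fin p) ℝ) (l0 : ℝ) (s : TrtSeq p t) (i j : Fin 2) : ℝ :=
  (Ahat S l0 s i j).trace

/-- `Â_{dij} = n ∑_s p_s Â_{sij}`. -/
def AhatD {p t : ℕ} (n : ℕ) (S : Matrix (Fin p) (Fin p) ℝ) (l0 : ℝ) (w : TrtSeq p t → ℝ)
    (i j : Fin 2) : Matrix (Fin t) (Fin t) ℝ :=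
  (n : ℝ) • ∑ s : TrtSeq p t, w s • Ahat S l0 s i j

/-- `A_{dij} = Â_{dij} - n (∑_s p_s H_i(s) B_t)' B̃ (∑_s p_s H_j(s) B_t)`. -/
def AD {p t : ℕ} (n : ℕ) (S : Matrix (Fin p) (Fin p) ℝ) (l0 : ℝ) (w : TrtSeq p t → ℝ)
    (i j : Fin 2) : Matrix (Fin t) (Fin t) ℝ :=
  AhatD n S l0 w i j -
    (n : ℝ) • ((∑ s : TrtSeq p t, w s • (Hmat l0 i s * Bmat t))ᵀ * Btil S *
      (∑ s : TrtSeq p t, w s • (Hmat l0 j s * Bmat t)))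

/-- `G` is a generalized inverse of `A`. -/
def IsGInv {t : ℕ} (A G : Matrix (Fin t) (Fin t) ℝ) : Prop := A * G * A = A

/-- `A_d(G) = A_{d11} - A_{d12} G A_{d21}` with `A_{d21} = A_{d12}'`. -/
def ADfun {p t : ℕ} (n : ℕ) (S : Matrix (Fin p) (Fin p) ℝ) (l0 : ℝ) (w : TrtSeq p t → ℝ)
    (G : Matrix (Fin t) (Fin t) ℝ) : Matrix (Fin t) (Fin t) ℝ :=
  AD n S l0 w 0 0 - AD n S l0 w 0 1 * G * (AD n S l0 w 0 1)ᵀ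

/-- `r_s(x) = h_{s11} + 2 h_{s12} x + h_{s22} x²`. -/
def rSeq {p t : ℕ} (S : Matrix (Fin p) (Fin p) ℝ) (l0 : ℝ) (s : TrtSeq p t) (x : ℝ) : ℝ :=
  hseq S l0 s 0 0 + 2 * hseq S l0 s 0 1 * x + hseq S l0 s 1 1 * x ^ 2

/-- `r(x) = max_s r_s(x)`. -/
def rMax (p t : ℕ) (S : Matrix (Fin p) (Fin p) ℝ) (l0 : ℝ) (x : ℝ) : ℝ :=
  sSup (Set.range fun s : TrtSeq p t => rSeq S l0 s x)

/-- `y_0 = inf_x r(x)`. -/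
def yZero (p t : ℕ) (S : Matrix (Fin p) (Fin p) ℝ) (l0 : ℝ) : ℝ := ⨅ x : ℝ, rMax p t S l0 x

/-!
If the symmetric matrices `C` and `K` annihilate the constants and `Φ_A(C) > 0`, the Cauchy–Schwarz
inequality gives `Φ_A(C) (tr K)² ≤ (t - 1) tr (K C Kᵀ)`, with equality when `K` inverts `C` on the
contrasts. Taking `K` with one eigenvalue `α` on the line of `τ` and another one `β` on the
contrasts orthogonal to `τ`, and averaging over the prior, bounds the criterion of every competitor
by a linear function of its weights: the second moment of the direction of `τ` is a multiple of the
centring matrix, so the average only involves the traces `c_{dij}`.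

For a pseudo symmetric design the information matrix itself has this two-eigenvalue form, with
`q_d(x_d)` on the line of `τ` and `q_d(λ0)` on its complement. Choosing `α`, `β` to be the inverses
turns the bound into the sufficiency of the maximum condition. Conversely, moving weight from `d` to
the relabellings of one sequence `s` keeps this form, and the right derivative of the criterion is a
positive multiple of the difference between the bracketed function of `s` and `1`; the point `x_d`
may be held fixed in this derivative because it minimises `q_d`. Finally, the weighted mean of that
function over `d` is `1`, so where it is at most `1` it equals `1` on the support of `d`.
-/

/-! ### The centring matrix -/

lemma Jmat_mulVec {t : ℕ} (v : Fin t → ℝ) : Jmat t *ᵥ v = fun _ => ∑ i, v i := by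
  ext
  simp [Jmat, mulVec, dotProduct]

lemma Bmat_transpose (t : ℕ) : (Bmat t)ᵀ = Bmat t := by
  ext i j
  simp [Bmat, Jmat, one_apply, eq_comm]

lemma Bmat_mulVec_of_sum_eq_zero {t : ℕ} {v : Fin t → ℝ} (hv : ∑ i, v i = 0) :
    Bmat t *ᵥ v = v := by
  ext i
  simp [Bmat, sub_mulVec, smul_mulVec, Jmat_mulVec, hv]

lemma Bmat_mulVec_one (t : ℕ) : Bmat t *ᵥ 1 = 0 := by
  ext i
  have : (t : ℝ) ≠ 0 := Nat.cast_ne_zero.mpr (Fin.pos i).ne'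
  simp [Bmat, sub_mulVec, smul_mulVec, Jmat_mulVec, this]

lemma mul_Bmat_of_mulVec_one_eq_zero {m : Type*} {t : ℕ} {N : Matrix m (Fin t) ℝ}
    (hN : N *ᵥ 1 = 0) : N * Bmat t = N := by
  have hNJ : N * Jmat t = 0 := by
    ext i j
    simpa [mul_apply, Jmat, mulVec, dotProduct] using congrFun hN i
  rw [Bmat, Matrix.mul_sub, Matrix.mul_one, Matrix.mul_smul, hNJ, smul_zero, sub_zero]

lemma Bmat_mul_self (t : ℕ) : Bmat t * Bmat t = Bmat t :=
  mul_Bmat_of_mulVec_one_eq_zero (Bmat_mulVec_one t)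

lemma trace_Bmat {t : ℕ} [NeZero t] : (Bmat t).trace = t - 1 := by
  simp [Bmat, Jmat, trace]

lemma mul_Bmat_eq_zero {m : Type*} {t : ℕ} {A : Matrix m (Fin t) ℝ}
    (hA : ∀ k i j, A k i = A k j) : A * Bmat t = 0 := by
  ext k i
  have hrow : (A * Bmat t) k i = A k i * (Bmat t *ᵥ 1) i := by
    simp only [mul_apply, mulVec, dotProduct, Pi.one_apply, mul_one, Finset.mul_sum]
    refine Finset.sum_congr rfl fun j _ => ?_
    rw [hA k j i, ← transpose_apply (Bmat t), Bmat_transpose]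
  rw [hrow, Bmat_mulVec_one, Pi.zero_apply, mul_zero, Matrix.zero_apply]

lemma eq_smul_Bmat_of_completelySymmetric {t : ℕ} (ht : 2 ≤ t) {C : Matrix (Fin t) (Fin t) ℝ}
    {a b : ℝ} (hC : C = a • 1 + b • Jmat t) (hC1 : C *ᵥ 1 = 0) :
    C = (C.trace / (t - 1)) • Bmat t := by
  have : NeZero t := ⟨by lia⟩
  have ht1 : (t : ℝ) - 1 ≠ 0 := sub_ne_zero.mpr (by exact_mod_cast (by lia : t ≠ 1))
  have hJ : Jmat t * Bmat t = 0 := mul_Bmat_eq_zero fun _ _ _ => rfl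
  have hCB : C = a • Bmat t := by
    rw [← mul_Bmat_of_mulVec_one_eq_zero hC1, hC, add_mul, smul_mul, smul_mul, hJ, one_mul,
      smul_zero, add_zero]
  rw [hCB, trace_smul, trace_Bmat, smul_eq_mul, mul_div_cancel_right₀ _ ht1]

lemma exists_perm_apply_eq_and_apply_eq {α : Type*} {a b c d : α} (hab : a ≠ b)
    (hcd : c ≠ d) : ∃ σ : Equiv.Perm α, σ a = c ∧ σ b = d := by
  have hcb : c ≠ Equiv.swap a c b := by
    simpa using (Equiv.swap a c).injective.ne hab
  refine ⟨(Equiv.swap a c).trans (Equiv.swap (Equiv.swap a c b) d), ?_, ?_⟩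
  · simp [Equiv.swap_apply_of_ne_of_ne hcb hcd]
  · simp

lemma eq_smul_Bmat_of_perm_invariant {t : ℕ} (ht : 2 ≤ t) {A : Matrix (Fin t) (Fin t) ℝ}
    (hA : ∀ (σ : Equiv.Perm (Fin t)) i j, A (σ i) (σ j) = A i j) (hA1 : A *ᵥ 1 = 0) :
    A = (A.trace / (t - 1)) • Bmat t := by
  let i₀ : Fin t := ⟨0, by lia⟩
  let i₁ : Fin t := ⟨1, by lia⟩
  refine eq_smul_Bmat_of_completelySymmetric ht (a := A i₀ i₀ - A i₀ i₁) (b := A i₀ i₁) ?_ hA1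
  ext i j
  obtain rfl | hij := eq_or_ne i j
  · have hdiag := hA (Equiv.swap i₀ i) i₀ i₀
    simp only [Equiv.swap_apply_left] at hdiag
    simp [hdiag, Jmat]
  · have hne : i₀ ≠ i₁ := by simp [i₀, i₁]
    obtain ⟨σ, h₀, h₁⟩ := exists_perm_apply_eq_and_apply_eq hne hij
    simp [← h₀, ← h₁, hA, Jmat, i₀, i₁]

/-! ### Axial matrices -/

/-- The orthogonal projection onto the line spanned by `τ` (zero if `τ = 0`). -/
def lineProj {t : ℕ} (τ : Fin t → ℝ) : Matrix (Fin t) (Fin t) ℝ :=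
  (τ ⬝ᵥ τ)⁻¹ • vecMulVec τ τ

/-- The endomorphism of the space of contrasts which acts as `α` on the line spanned by the
contrast `τ` and as `β` on its orthogonal complement. -/
def axialMat {t : ℕ} (τ : Fin t → ℝ) (α β : ℝ) : Matrix (Fin t) (Fin t) ℝ :=
  α • lineProj τ + β • (Bmat t - lineProj τ)

section Axial

variable {t : ℕ} {τ : Fin t → ℝ}

lemma lineProj_transpose (τ : Fin t → ℝ) : (lineProj τ)ᵀ = lineProj τ := by
  rw [lineProj, transpose_smul, transpose_vecMulVec]

lemma inv_mul_inv_mul_self {G : Type*} [GroupWithZero G] (a : G) : a⁻¹ * (a⁻¹ * a) = a⁻¹ := by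
  simpa only [inv_inv, mul_assoc] using mul_self_mul_inv a⁻¹

lemma lineProj_mul_self (τ : Fin t → ℝ) : lineProj τ * lineProj τ = lineProj τ := by
  simp only [lineProj, smul_mul_assoc, mul_smul_comm, vecMulVec_mul_vecMulVec, smul_smul,
    vecMulVec_smul, inv_mul_inv_mul_self]

lemma Bmat_mul_lineProj (hτ : ∑ i, τ i = 0) : Bmat t * lineProj τ = lineProj τ := by
  rw [lineProj, mul_smul_comm, mul_vecMulVec, Bmat_mulVec_of_sum_eq_zero hτ]

lemma lineProj_mul_Bmat (hτ : ∑ i, τ i = 0) : lineProj τ * Bmat t = lineProj τ := by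
  simpa only [transpose_mul, Bmat_transpose, lineProj_transpose] using
    congrArg transpose (Bmat_mul_lineProj hτ)

lemma trace_lineProj (hτ : τ ≠ 0) : (lineProj τ).trace = 1 := by
  rw [lineProj, trace_smul, trace_vecMulVec, smul_eq_mul,
    inv_mul_cancel₀ (dotProduct_self_eq_zero.not.mpr hτ)]

lemma trace_mul_lineProj (N : Matrix (Fin t) (Fin t) ℝ) (τ : Fin t → ℝ) :
    (N * lineProj τ).trace = (τ ⬝ᵥ τ)⁻¹ * (τ ⬝ᵥ N *ᵥ τ) := by
  rw [lineProj, mul_smul_comm, trace_smul, mul_vecMulVec, trace_vecMulVec,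
    dotProduct_comm (N *ᵥ τ), smul_eq_mul]

lemma two_le_of_sum_eq_zero (hτ : ∑ i, τ i = 0) (hτ0 : τ ≠ 0) : 2 ≤ t := by
  contrapose! hτ0
  have : Subsingleton (Fin t) := Fin.subsingleton_iff_le_one.mpr (by lia)
  ext i
  rwa [Fintype.sum_subsingleton _ i] at hτ

lemma axialMat_mul (hτ : ∑ i, τ i = 0) (α β α' β' : ℝ) :
    axialMat τ α β * axialMat τ α' β' = axialMat τ (α * α') (β * β') := by
  simp only [axialMat, add_mul, mul_add, smul_mul_assoc, mul_smul_comm, sub_mul, mul_sub,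
    lineProj_mul_self, Bmat_mul_lineProj hτ, lineProj_mul_Bmat hτ, Bmat_mul_self]
  module

lemma axialMat_one_one (τ : Fin t → ℝ) : axialMat τ 1 1 = Bmat t := by
  simp [axialMat]

lemma axialMat_transpose (τ : Fin t → ℝ) (α β : ℝ) : (axialMat τ α β)ᵀ = axialMat τ α β := by
  simp only [axialMat, transpose_add, transpose_smul, transpose_sub, lineProj_transpose,
    Bmat_transpose]

lemma axialMat_mulVec_one (hτ : ∑ i, τ i = 0) (α β : ℝ) : axialMat τ α β *ᵥ 1 = 0 := by
  rw [← mul_one α, ← mul_one β, ← axialMat_mul hτ, axialMat_one_one, ← mulVec_mulVec,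
    Bmat_mulVec_one, mulVec_zero]

lemma trace_axialMat (hτ : ∑ i, τ i = 0) (hτ0 : τ ≠ 0) (α β : ℝ) :
    (axialMat τ α β).trace = α + (t - 2) * β := by
  have : NeZero t := ⟨(two_le_of_sum_eq_zero hτ hτ0).trans_lt' two_pos |>.ne'⟩
  simp only [axialMat, trace_add, trace_smul, trace_sub, trace_lineProj hτ0, trace_Bmat,
    smul_eq_mul]
  ring

lemma trace_mul_axialMat {N : Matrix (Fin t) (Fin t) ℝ} (hN : N *ᵥ 1 = 0) (τ : Fin t → ℝ)
    (α β : ℝ) : (N * axialMat τ α β).trace =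
      α * (N * lineProj τ).trace + β * (N.trace - (N * lineProj τ).trace) := by
  rw [axialMat, mul_add, mul_smul_comm, mul_smul_comm, mul_sub,
    mul_Bmat_of_mulVec_one_eq_zero hN, trace_add, trace_smul, trace_smul, trace_sub, smul_eq_mul,
    smul_eq_mul]

lemma trace_mul_posSemidef_mul_transpose_nonneg {N : Matrix (Fin t) (Fin t) ℝ}
    (hN : N.PosSemidef) (K : Matrix (Fin t) (Fin t) ℝ) : 0 ≤ (K * N * Kᵀ).trace := by
  simpa only [conjTranspose_eq_transpose_of_trivial] using
    (hN.mul_mul_conjTranspose_same K).trace_nonneg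

lemma trace_axialMat_mul_mul_axialMat (hτ : ∑ i, τ i = 0) {N : Matrix (Fin t) (Fin t) ℝ}
    (hN : N *ᵥ 1 = 0) (α β : ℝ) :
    (axialMat τ α β * N * (axialMat τ α β)ᵀ).trace =
      α ^ 2 * (N * lineProj τ).trace + β ^ 2 * (N.trace - (N * lineProj τ).trace) := by
  rw [axialMat_transpose, mul_assoc, trace_mul_comm, mul_assoc, axialMat_mul hτ,
    trace_mul_axialMat hN, sq, sq]

lemma axialMat_posSemidef (hτ : ∑ i, τ i = 0) {α β : ℝ} (hα : 0 ≤ α) (hβ : 0 ≤ β) :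
    (axialMat τ α β).PosSemidef := by
  have hsq : axialMat τ α β = (axialMat τ √α √β)ᴴ * axialMat τ √α √β := by
    rw [conjTranspose_eq_transpose_of_trivial, axialMat_transpose, axialMat_mul hτ,
      Real.mul_self_sqrt hα, Real.mul_self_sqrt hβ]
  exact hsq ▸ posSemidef_conjTranspose_mul_self _

end Axial

/-! ### The A-criterion -/

section ACriterion

variable {t : ℕ} {C D K U : Matrix (Fin t) (Fin t) ℝ}

lemma exists_orthogonal_diagonalization (hC : C.IsHermitian) :
    ∃ U : Matrix (Fin t) (Fin t) ℝ, U * Uᵀ = 1 ∧ Uᵀ * C * U = diagonal (sortedEigs C) := by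
  let σ := Tuple.sort hC.eigenvalues
  let V : Matrix (Fin t) (Fin t) ℝ := hC.eigenvectorUnitary
  have hV : Vᵀ * V = 1 := by
    rw [← conjTranspose_eq_transpose_of_trivial]
    exact Unitary.coe_star_mul_self hC.eigenvectorUnitary
  have hVCV : Vᵀ * C * V = diagonal hC.eigenvalues := by
    rw [← conjTranspose_eq_transpose_of_trivial]
    simpa [Unitary.conjStarAlgAut_apply, V, star_eq_conjTranspose] using
      hC.conjStarAlgAut_star_eigenvectorUnitary
  have heig : sortedEigs C = hC.eigenvalues ∘ σ := dif_pos hC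
  refine ⟨V.submatrix id σ, ?_, ?_⟩
  · rw [transpose_submatrix, submatrix_mul_equiv, mul_eq_one_comm.mp hV, submatrix_id_id]
  · have hsub : (V.submatrix id σ)ᵀ * C * V.submatrix id σ = (Vᵀ * C * V).submatrix σ σ := rfl
    rw [hsub, hVCV, heig, submatrix_diagonal_equiv]

lemma sq_trace_le_sum_inv_mul_trace {m : Type*} [Fintype m] [DecidableEq m] {s : Finset m}
    {a : m → ℝ} (ha : ∀ i ∈ s, 0 < a i) {M : Matrix m m ℝ} (hM : ∀ i, ∀ j ∉ s, M i j = 0) :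
    M.trace ^ 2 ≤ (∑ i ∈ s, (a i)⁻¹) * (M * diagonal a * Mᵀ).trace := by
  have hnonneg : ∀ i, ∀ j ∈ s, 0 ≤ a j * M i j ^ 2 := fun i j hj =>
    mul_nonneg (ha j hj).le (sq_nonneg _)
  have htrace : M.trace = ∑ i ∈ s, M i i :=
    (Finset.sum_subset (Finset.subset_univ s) fun i _ hi => hM i i hi).symm
  have htrace' : (M * diagonal a * Mᵀ).trace = ∑ i, ∑ j ∈ s, a j * M i j ^ 2 := by
    refine Finset.sum_congr rfl fun i _ => ?_
    rw [diag_apply, mul_apply]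
    refine (Finset.sum_subset (Finset.subset_univ s) fun j _ hj => ?_).symm.trans ?_
    · rw [transpose_apply, hM i j hj, mul_zero]
    · exact Finset.sum_congr rfl fun j _ => by rw [mul_diagonal, transpose_apply]; ring
  have hdiag : ∑ i ∈ s, a i * M i i ^ 2 ≤ ∑ i, ∑ j ∈ s, a j * M i j ^ 2 :=
    (Finset.sum_le_sum fun i hi => Finset.single_le_sum (hnonneg i) hi).trans
      (Finset.sum_le_sum_of_subset_of_nonneg (Finset.subset_univ s) fun i _ _ =>
        Finset.sum_nonneg (hnonneg i))
  calc M.trace ^ 2 ≤ (∑ i ∈ s, (a i)⁻¹) * ∑ i ∈ s, a i * M i i ^ 2 := by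
        rw [htrace]
        refine Finset.sum_sq_le_sum_mul_sum_of_sq_le_mul s (fun i hi => (inv_pos.mpr (ha i hi)).le)
          (fun i hi => hnonneg i i hi) fun i hi => ?_
        rw [inv_mul_cancel_left₀ (ha i hi).ne']
    _ ≤ (∑ i ∈ s, (a i)⁻¹) * (M * diagonal a * Mᵀ).trace := by
        rw [htrace']
        exact mul_le_mul_of_nonneg_left hdiag
          (Finset.sum_nonneg fun i hi => (inv_pos.mpr (ha i hi)).le)

lemma mul_apply_eq_zero_of_mulVec_eq_zero {m : Type*} [Fintype m] [DecidableEq m]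
    {K U : Matrix m m ℝ} {x : m → ℝ} (hU : U * Uᵀ = 1) (hx : x ≠ 0) {k : m}
    (hUx : ∀ i ≠ k, (Uᵀ *ᵥ x) i = 0) (hK : K *ᵥ x = 0) (i : m) : (K * U) i k = 0 := by
  have hsingle : Uᵀ *ᵥ x = Pi.single k ((Uᵀ *ᵥ x) k) := by
    ext j
    obtain rfl | hj := eq_or_ne j k
    · rw [Pi.single_eq_same]
    · rw [Pi.single_eq_of_ne hj, hUx j hj]
  have hk : (Uᵀ *ᵥ x) k ≠ 0 := fun h => hx <| by
    rw [← one_mulVec x, ← hU, ← mulVec_mulVec, hsingle, h, Pi.single_zero, mulVec_zero]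
  have hKU : (K * U) *ᵥ (Uᵀ *ᵥ x) = 0 := by
    rw [mulVec_mulVec, mul_assoc, hU, mul_one, hK]
  rw [hsingle, mulVec_single] at hKU
  simpa [hk] using congrFun hKU i

lemma transpose_mulVec_apply_eq_zero {m : Type*} [Fintype m] [DecidableEq m]
    {C U : Matrix m m ℝ} {a x : m → ℝ} (hU : U * Uᵀ = 1) (hUCU : Uᵀ * C * U = diagonal a)
    (hCx : C *ᵥ x = 0) {i : m} (hi : a i ≠ 0) : (Uᵀ *ᵥ x) i = 0 := by
  have : diagonal a *ᵥ (Uᵀ *ᵥ x) = 0 := by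
    rw [← hUCU, mulVec_mulVec, mul_assoc, hU, mul_one, ← mulVec_mulVec, hCx, mulVec_zero]
  simpa [mulVec_diagonal, hi] using congrFun this i

lemma PhiA_of_pos [NeZero t] (hC : ∀ i : Fin t, i ≠ 0 → 0 < sortedEigs C i) :
    PhiA C = (t - 1) * (∑ i ∈ Finset.univ.erase 0, (sortedEigs C i)⁻¹)⁻¹ := by
  have hfilter : (Finset.univ.filter fun i : Fin t => (i : ℕ) ≠ 0) = Finset.univ.erase 0 := by
    ext i
    simp [Fin.val_eq_zero_iff]
  rw [PhiA, if_pos (by simpa only [ne_eq, Fin.val_eq_zero_iff] using hC), hfilter]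

lemma sortedEigs_pos_of_PhiA_ne_zero [NeZero t] (hC : PhiA C ≠ 0) {i : Fin t} (hi : i ≠ 0) :
    0 < sortedEigs C i := by
  by_contra hneg
  exact hC (if_neg fun h => hneg (h i (Fin.val_eq_zero_iff.not.mpr hi)))

/-- Equality holds when `K` inverts `C` on the space of contrasts. -/
lemma PhiA_mul_sq_trace_le [NeZero t] (hC : C.IsHermitian) (hC1 : C *ᵥ 1 = 0) (hK1 : K *ᵥ 1 = 0)
    (hPhi : PhiA C ≠ 0) : PhiA C * K.trace ^ 2 ≤ (t - 1) * (K * C * Kᵀ).trace := by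
  obtain ⟨U, hU, hUCU⟩ := exists_orthogonal_diagonalization hC
  have hpos : ∀ i ∈ Finset.univ.erase (0 : Fin t), 0 < sortedEigs C i := fun i hi =>
    sortedEigs_pos_of_PhiA_ne_zero hPhi (Finset.ne_of_mem_erase hi)
  have hKU : ∀ i, (K * U) i 0 = 0 := mul_apply_eq_zero_of_mulVec_eq_zero hU one_ne_zero
    (fun i hi => transpose_mulVec_apply_eq_zero hU hUCU hC1 (hpos i (by simpa using hi)).ne') hK1
  have htrK : (Uᵀ * K * U).trace = K.trace := by
    rw [mul_assoc, trace_mul_comm, mul_assoc, hU, mul_one]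
  have htrC : (Uᵀ * K * U * diagonal (sortedEigs C) * (Uᵀ * K * U)ᵀ).trace =
      (K * C * Kᵀ).trace := by
    have : Uᵀ * K * U * (Uᵀ * C * U) * (Uᵀ * K * U)ᵀ = Uᵀ * (K * C * Kᵀ) * U := by
      simp only [transpose_mul, transpose_transpose, mul_assoc]
      simp only [← mul_assoc U Uᵀ, hU, one_mul]
    rw [← hUCU, this, mul_assoc, trace_mul_comm, mul_assoc, hU, mul_one]
  have hCS := sq_trace_le_sum_inv_mul_trace hpos (M := Uᵀ * K * U) fun i j hj => by
    obtain rfl : j = 0 := by simpa using hj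
    simp [mul_assoc, mul_apply (M := Uᵀ), hKU]
  rw [htrK, htrC] at hCS
  have hPhiA := PhiA_of_pos fun i hi => hpos i (by simpa using hi)
  have hsum : 0 < ∑ i ∈ Finset.univ.erase (0 : Fin t), (sortedEigs C i)⁻¹ := by
    refine (Finset.sum_nonneg fun i hi => (inv_pos.mpr (hpos i hi)).le).lt_of_ne' fun h => hPhi ?_
    rw [hPhiA, h, _root_.inv_zero, mul_zero]
  rw [hPhiA, mul_assoc]
  refine mul_le_mul_of_nonneg_left ?_ (sub_nonneg.mpr (Nat.one_le_cast.mpr NeZero.one_le))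
  rwa [inv_mul_le_iff₀ hsum]

lemma transpose_mul_Bmat_mul_apply_self [NeZero t] (hU : U * Uᵀ = 1) (i : Fin t) :
    (Uᵀ * Bmat t * U) i i = 1 - (t : ℝ)⁻¹ * (Uᵀ *ᵥ 1) i ^ 2 := by
  have hU' : Uᵀ * U = 1 := mul_eq_one_comm.mp hU
  have hJ : Jmat t = vecMulVec 1 1 := by
    ext
    simp [Jmat, vecMulVec_apply]
  have : Uᵀ * Bmat t * U = 1 - (t : ℝ)⁻¹ • vecMulVec (Uᵀ *ᵥ 1) (Uᵀ *ᵥ 1) := by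
    rw [Bmat, mul_sub, mul_one, sub_mul, hU', hJ, mul_smul_comm, smul_mul_assoc, mul_vecMulVec,
      vecMulVec_mul, mulVec_transpose]
  rw [this]
  simp [vecMulVec_apply, sq]

lemma sortedEigs_pos_of_mul_eq_Bmat [NeZero t] (hC : C.PosSemidef) (hDC : D * C = Bmat t)
    {i : Fin t} (hi : i ≠ 0) : 0 < sortedEigs C i := by
  have heig : sortedEigs C = fun i =>
      hC.isHermitian.eigenvalues (Tuple.sort hC.isHermitian.eigenvalues i) := dif_pos hC.isHermitian
  have hmono : Monotone (sortedEigs C) := heig ▸ Tuple.monotone_sort hC.isHermitian.eigenvalues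
  have hnonneg : ∀ i, 0 ≤ sortedEigs C i := fun i => heig ▸ hC.eigenvalues_nonneg _
  obtain ⟨U, hU, hUCU⟩ := exists_orthogonal_diagonalization hC.isHermitian
  have hB : Uᵀ * Bmat t * U = Uᵀ * D * U * diagonal (sortedEigs C) := by
    rw [← hUCU, ← hDC]
    simp only [mul_assoc]
    simp only [← mul_assoc U Uᵀ, hU, one_mul]
  have hle : ∀ i, 0 ≤ 1 - (Uᵀ * Bmat t * U) i i := fun i => by
    rw [transpose_mul_Bmat_mul_apply_self hU, sub_sub_cancel]
    positivity
  have hker : ∀ i, sortedEigs C i = 0 → 1 - (Uᵀ * Bmat t * U) i i = 1 := fun i h => by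
    rw [hB, mul_diagonal, h, mul_zero, sub_zero]
  have hsum : ∑ i, (1 - (Uᵀ * Bmat t * U) i i) = 1 := by
    have htr : (Uᵀ * Bmat t * U).trace = t - 1 := by
      rw [mul_assoc, trace_mul_comm, mul_assoc, hU, mul_one, trace_Bmat]
    simp only [trace, diag_apply] at htr
    simp [Finset.sum_sub_distrib, htr]
  refine (hnonneg i).lt_of_ne' fun hzero => ?_
  have hzero' : sortedEigs C 0 = 0 := (hzero ▸ hmono (Fin.zero_le i)).antisymm (hnonneg 0)
  have hpair := Finset.sum_le_sum_of_subset_of_nonneg (Finset.subset_univ {i, 0})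
    fun j _ _ => hle j
  rw [hsum, Finset.sum_pair hi, hker i hzero, hker 0 hzero'] at hpair
  norm_num at hpair

lemma PhiA_eq_of_mul_eq_Bmat [NeZero t] (hC : C.PosSemidef) (hC1 : C *ᵥ 1 = 0)
    (hD1 : D *ᵥ 1 = 0) (hDC : D * C = Bmat t) : PhiA C = (t - 1) * (D.trace)⁻¹ := by
  obtain ⟨U, hU, hUCU⟩ := exists_orthogonal_diagonalization hC.isHermitian
  have hpos : ∀ i ≠ 0, 0 < sortedEigs C i := fun i => sortedEigs_pos_of_mul_eq_Bmat hC hDC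
  have hU1 : ∀ i ≠ 0, (Uᵀ *ᵥ 1) i = 0 := fun i hi =>
    transpose_mulVec_apply_eq_zero hU hUCU hC1 (hpos i hi).ne'
  have hB : Uᵀ * D * U * diagonal (sortedEigs C) = Uᵀ * Bmat t * U := by
    rw [← hUCU, ← hDC]
    simp only [mul_assoc]
    simp only [← mul_assoc U Uᵀ, hU, one_mul]
  have hzero : (Uᵀ * D * U) 0 0 = 0 := by
    rw [mul_assoc, mul_apply]
    simp [mul_apply_eq_zero_of_mulVec_eq_zero hU one_ne_zero hU1 hD1]
  have hinv : ∀ i ∈ Finset.univ.erase 0, (Uᵀ * D * U) i i = (sortedEigs C i)⁻¹ := fun i hi => by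
    have hi0 := Finset.ne_of_mem_erase hi
    have hii := congrFun (congrFun hB i) i
    rw [transpose_mul_Bmat_mul_apply_self hU, hU1 i hi0, mul_diagonal] at hii
    exact eq_inv_of_mul_eq_one_left (by simpa using hii)
  have htr : D.trace = (Uᵀ * D * U).trace := by
    rw [mul_assoc, trace_mul_comm, mul_assoc, hU, mul_one]
  rw [PhiA_of_pos hpos, htr, trace, ← Finset.add_sum_erase _ _ (Finset.mem_univ 0), diag_apply,
    hzero, zero_add]
  simp only [diag_apply, Finset.sum_congr rfl hinv]

lemma PhiA_axialMat {τ : Fin t → ℝ} (hτ : ∑ i, τ i = 0) (hτ0 : τ ≠ 0) {a b : ℝ} (ha : 0 < a)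
    (hb : 0 < b) : PhiA (axialMat τ a b) = (t - 1) * (a⁻¹ + (t - 2) * b⁻¹)⁻¹ := by
  have : NeZero t := ⟨(two_le_of_sum_eq_zero hτ hτ0).trans_lt' two_pos |>.ne'⟩
  rw [PhiA_eq_of_mul_eq_Bmat (axialMat_posSemidef hτ ha.le hb.le) (axialMat_mulVec_one hτ a b)
    (axialMat_mulVec_one hτ a⁻¹ b⁻¹), trace_axialMat hτ hτ0]
  rw [axialMat_mul hτ, inv_mul_cancel₀ ha.ne', inv_mul_cancel₀ hb.ne', axialMat_one_one]

end ACriterion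

/-! ### Isotropic priors -/

/-- A prior on nonzero contrasts whose random line has the mean projection of a uniformly
distributed one. This is all that the A-criterion of a balanced design sees of the prior. -/
structure IsIsotropicPrior {t : ℕ} (g : Measure (Fin t → ℝ)) : Prop where
  isProbabilityMeasure : IsProbabilityMeasure g
  ae_contrast : ∀ᵐ τ ∂g, ∑ i, τ i = 0 ∧ τ ≠ 0
  integral_lineProj : ∀ i j, ∫ τ, lineProj τ i j ∂g = ((t : ℝ) - 1)⁻¹ * Bmat t i j

section Priors

variable {t : ℕ} {g : Measure (Fin t → ℝ)}

lemma lineProj_apply (τ : Fin t → ℝ) (i j : Fin t) :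
    lineProj τ i j = (τ ⬝ᵥ τ)⁻¹ * (τ i * τ j) := rfl

lemma sq_lineProj_apply_le (τ : Fin t → ℝ) (i j : Fin t) :
    lineProj τ i j ^ 2 ≤ lineProj τ i i := by
  have hsum : lineProj τ i i = ∑ k, lineProj τ i k ^ 2 := by
    conv_lhs => rw [← lineProj_mul_self, mul_apply]
    refine Finset.sum_congr rfl fun k _ => ?_
    rw [sq, ← transpose_apply (lineProj τ) i k, lineProj_transpose]
  exact hsum ▸ Finset.single_le_sum (f := fun k => lineProj τ i k ^ 2)
    (fun k _ => sq_nonneg _) (Finset.mem_univ j)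

lemma abs_lineProj_apply_le_one (τ : Fin t → ℝ) (i j : Fin t) : |lineProj τ i j| ≤ 1 := by
  have hdiag : lineProj τ i i ≤ 1 := by nlinarith [sq_lineProj_apply_le τ i i]
  exact abs_le_one_iff_mul_self_le_one.mpr
    (sq (lineProj τ i j) ▸ (sq_lineProj_apply_le τ i j).trans hdiag)

lemma integrable_lineProj_apply [IsFiniteMeasure g] (i j : Fin t) :
    Integrable (fun τ => lineProj τ i j) g := by
  refine Integrable.of_bound (C := 1) ?_ (ae_of_all _ fun τ => abs_lineProj_apply_le_one τ i j)
  simp only [lineProj_apply, dotProduct]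
  exact Measurable.aestronglyMeasurable (by fun_prop)

lemma lineProj_comp_perm (τ : Fin t → ℝ) (σ : Equiv.Perm (Fin t)) (i j : Fin t) :
    lineProj (fun k => τ (σ k)) i j = lineProj τ (σ i) (σ j) := by
  simp only [lineProj_apply, dotProduct, Equiv.sum_comp σ fun k => τ k * τ k]

lemma IsExchangeablePrior.isIsotropicPrior (hg : IsExchangeablePrior g) : IsIsotropicPrior g := by
  have : IsProbabilityMeasure g := hg.1
  have hae : ∀ᵐ τ ∂g, ∑ i, τ i = 0 ∧ τ ≠ 0 := hg.2.1
  let A : Matrix (Fin t) (Fin t) ℝ := of fun i j => ∫ τ, lineProj τ i j ∂g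
  have hAinv : ∀ (σ : Equiv.Perm (Fin t)) i j, A (σ i) (σ j) = A i j := fun σ i j => by
    have hσ : Measurable fun (τ : Fin t → ℝ) k => τ (σ k) := by fun_prop
    have hmap := integral_map (μ := g) hσ.aemeasurable (f := fun τ => lineProj τ i j)
      (by rw [hg.2.2 σ]; exact (integrable_lineProj_apply i j).aestronglyMeasurable)
    rw [hg.2.2 σ] at hmap
    simpa only [A, of_apply, lineProj_comp_perm] using hmap.symm
  have hA1 : A *ᵥ 1 = 0 := by
    ext i
    simp only [A, mulVec, dotProduct, of_apply, Pi.one_apply, mul_one, Pi.zero_apply]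
    rw [← integral_finsetSum _ fun j _ => integrable_lineProj_apply i j]
    refine integral_eq_zero_of_ae (hae.mono fun τ hτ => ?_)
    simp only [lineProj_apply, ← Finset.mul_sum, hτ.1, mul_zero, Pi.zero_apply]
  have htr : A.trace = 1 := by
    have hae1 : (fun τ => ∑ i, lineProj τ i i) =ᵐ[g] fun _ => 1 :=
      hae.mono fun τ hτ => trace_lineProj hτ.2
    simp only [A, trace, diag_apply, of_apply]
    rw [← integral_finsetSum _ fun j _ => integrable_lineProj_apply j j, integral_congr_ae hae1]
    simp
  obtain ⟨τ, hτ, hτ0⟩ := hae.exists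
  refine ⟨hg.1, hae, fun i j => ?_⟩
  have hA := eq_smul_Bmat_of_perm_invariant (two_le_of_sum_eq_zero hτ hτ0) hAinv hA1
  rw [htr, one_div] at hA
  exact congrFun (congrFun hA i) j

namespace IsIsotropicPrior

lemma two_le (hg : IsIsotropicPrior g) : 2 ≤ t := by
  have := hg.isProbabilityMeasure
  obtain ⟨τ, hτ, hτ0⟩ := hg.ae_contrast.exists
  exact two_le_of_sum_eq_zero hτ hτ0

lemma integrable_trace_mul_lineProj (hg : IsIsotropicPrior g) (N : Matrix (Fin t) (Fin t) ℝ) :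
    Integrable (fun τ => (N * lineProj τ).trace) g := by
  have := hg.isProbabilityMeasure
  simp only [trace, diag_apply, mul_apply]
  exact integrable_finsetSum _ fun i _ => integrable_finsetSum _ fun j _ =>
    (integrable_lineProj_apply j i).const_mul _

lemma integral_trace_mul_lineProj (hg : IsIsotropicPrior g) {N : Matrix (Fin t) (Fin t) ℝ}
    (hN : N *ᵥ 1 = 0) : ∫ τ, (N * lineProj τ).trace ∂g = N.trace / (t - 1) := by
  have := hg.isProbabilityMeasure
  have hint : ∀ i j, Integrable (fun τ => N i j * lineProj τ j i) g := fun i j =>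
    (integrable_lineProj_apply j i).const_mul _
  have hentries : ∫ τ, (N * lineProj τ).trace ∂g = ∑ i, ∑ j, N i j * ∫ τ, lineProj τ j i ∂g := by
    simp only [trace, diag_apply, mul_apply]
    rw [integral_finsetSum _ fun i _ => integrable_finsetSum _ fun j _ => hint i j]
    refine Finset.sum_congr rfl fun i _ => ?_
    rw [integral_finsetSum _ fun j _ => hint i j]
    exact Finset.sum_congr rfl fun j _ => integral_const_mul _ _
  calc ∫ τ, (N * lineProj τ).trace ∂g
      = ((t : ℝ) - 1)⁻¹ * (N * Bmat t).trace := by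
        rw [hentries]
        simp only [hg.integral_lineProj, trace, diag_apply, mul_apply, Finset.mul_sum,
          mul_left_comm]
    _ = N.trace / (t - 1) := by rw [mul_Bmat_of_mulVec_one_eq_zero hN, inv_mul_eq_div]

end IsIsotropicPrior

end Priors

/-! ### Information matrices -/

lemma Btil_posSemidef {p : ℕ} {S : Matrix (Fin p) (Fin p) ℝ} (hS : S.PosDef) :
    (Btil S).PosSemidef := by
  have hST : S⁻¹ᵀ = S⁻¹ := by
    simpa only [conjTranspose_eq_transpose_of_trivial] using hS.inv.isHermitian.eq
  have hJT : (Jmat p)ᵀ = Jmat p := rfl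
  set k : ℝ := (fun _ => (1 : ℝ)) ⬝ᵥ (S⁻¹ *ᵥ fun _ => (1 : ℝ)) with hk
  have hJSJ : Jmat p * (S⁻¹ * Jmat p) = k • Jmat p := by
    have hJ : Jmat p = vecMulVec (fun _ => 1) fun _ => 1 := by
      ext
      simp [Jmat, vecMulVec_apply]
    rw [hJ, mul_vecMulVec, vecMulVec_mul_vecMulVec, vecMulVec_smul]
  have hgram : Btil S = (1 - k⁻¹ • (Jmat p * S⁻¹))ᴴ * S⁻¹ * (1 - k⁻¹ • (Jmat p * S⁻¹)) := by
    rw [conjTranspose_eq_transpose_of_trivial, transpose_sub, transpose_one, transpose_smul,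
      transpose_mul, hST, hJT, Btil, ← hk]
    have hJSJS : Jmat p * (S⁻¹ * (Jmat p * S⁻¹)) = k • (Jmat p * S⁻¹) := by
      rw [← mul_assoc S⁻¹, ← mul_assoc, hJSJ, smul_mul_assoc]
    simp only [sub_mul, mul_sub, one_mul, mul_one, smul_mul_assoc, mul_smul_comm, mul_assoc,
      hJSJS, smul_sub, smul_smul, inv_mul_inv_mul_self]
    module
  exact hgram ▸ hS.inv.posSemidef.conjTranspose_mul_mul_same _

/-- The centred incidence matrix of a design, averaged over its sequences: the mean of `T_s B_t`
for `i = 0` and of `F_s B_t` for `i = 1`. -/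
def centredMean {p t : ℕ} (w : TrtSeq p t → ℝ) (i : Fin 2) : Matrix (Fin p) (Fin t) ℝ :=
  ∑ s, w s • (Gmat i s * Bmat t)

/-- The quadratic pencil `A₀₀ + x (A₀₁ + A₁₀) + x² A₁₁` of a `2 × 2` family of matrices: the
information about direct effects when the carryover effects are known to be `x` times the direct
ones. -/
def quadPencil {m : Type*} (A : Fin 2 → Fin 2 → Matrix m m ℝ) (x : ℝ) : Matrix m m ℝ :=
  A 0 0 + x • (A 0 1 + A 1 0) + x ^ 2 • A 1 1

lemma quadPencil_transpose_mul_mul {l m : Type*} [Fintype l] (X : Fin 2 → Matrix l m ℝ)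
    (Q : Matrix l l ℝ) (x : ℝ) :
    quadPencil (fun i j => (X i)ᵀ * Q * X j) x = (X 0 + x • X 1)ᵀ * Q * (X 0 + x • X 1) := by
  simp only [quadPencil, transpose_add, transpose_smul, Matrix.add_mul, Matrix.mul_add,
    Matrix.smul_mul, Matrix.mul_smul]
  module

lemma quadPencil_transpose_mul_mul_posSemidef {l m : Type*} [Fintype l] [Finite m]
    (X : Fin 2 → Matrix l m ℝ) {Q : Matrix l l ℝ} (hQ : Q.PosSemidef) (x : ℝ) :
    (quadPencil (fun i j => (X i)ᵀ * Q * X j) x).PosSemidef := by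
  have := Fintype.ofFinite m
  rw [quadPencil_transpose_mul_mul, ← conjTranspose_eq_transpose_of_trivial]
  exact hQ.conjTranspose_mul_mul_same _

lemma quadPencil_mulVec_eq_zero {m : Type*} [Fintype m] {A : Fin 2 → Fin 2 → Matrix m m ℝ}
    {v : m → ℝ} (hA : ∀ i j, A i j *ᵥ v = 0) (x : ℝ) : quadPencil A x *ᵥ v = 0 := by
  simp only [quadPencil, add_mulVec, smul_mulVec, hA, add_zero, smul_zero]

lemma quadPencil_transpose {m : Type*} {A : Fin 2 → Fin 2 → Matrix m m ℝ}
    (hA : ∀ i j, (A i j)ᵀ = A j i) (x : ℝ) : (quadPencil A x)ᵀ = quadPencil A x := by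
  simp only [quadPencil, transpose_add, transpose_smul, hA, add_comm (A 1 0)]

section Information

variable {p t n : ℕ} {S : Matrix (Fin p) (Fin p) ℝ} {w : TrtSeq p t → ℝ} {τ : Fin t → ℝ}

lemma Chat_eq_transpose_mul_mul (S : Matrix (Fin p) (Fin p) ℝ) (s : TrtSeq p t) (i j : Fin 2) :
    Chat S s i j = (Gmat i s * Bmat t)ᵀ * Btil S * (Gmat j s * Bmat t) := by
  simp only [Chat, transpose_mul, Bmat_transpose, Matrix.mul_assoc]

lemma CD_eq_ChatD_sub (n : ℕ) (S : Matrix (Fin p) (Fin p) ℝ) (w : TrtSeq p t → ℝ) (i j : Fin 2) :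
    CD n S w i j = ChatD n S w i j -
      (n : ℝ) • ((centredMean w i)ᵀ * Btil S * centredMean w j) := rfl

lemma Btil_transpose (hS : S.PosDef) : (Btil S)ᵀ = Btil S := by
  simpa only [conjTranspose_eq_transpose_of_trivial] using (Btil_posSemidef hS).isHermitian.eq

lemma Chat_transpose (hS : S.PosDef) (s : TrtSeq p t) (i j : Fin 2) :
    (Chat S s i j)ᵀ = Chat S s j i := by
  simp only [Chat_eq_transpose_mul_mul, transpose_mul, transpose_transpose, Btil_transpose hS,
    Matrix.mul_assoc]

lemma ChatD_transpose (hS : S.PosDef) (w : TrtSeq p t → ℝ) (i j : Fin 2) :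
    (ChatD n S w i j)ᵀ = ChatD n S w j i := by
  simp only [ChatD, transpose_smul, transpose_sum, Chat_transpose hS]

lemma CD_transpose (hS : S.PosDef) (w : TrtSeq p t → ℝ) (i j : Fin 2) :
    (CD n S w i j)ᵀ = CD n S w j i := by
  simp only [CD_eq_ChatD_sub, transpose_sub, transpose_smul, ChatD_transpose hS, transpose_mul,
    transpose_transpose, Btil_transpose hS, Matrix.mul_assoc]

lemma ChatD_mulVec_one (n : ℕ) (S : Matrix (Fin p) (Fin p) ℝ) (w : TrtSeq p t → ℝ)
    (i j : Fin 2) : ChatD n S w i j *ᵥ 1 = 0 := by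
  simp only [ChatD, Chat, smul_mulVec, sum_mulVec, ← mulVec_mulVec, Bmat_mulVec_one, mulVec_zero,
    smul_zero, Finset.sum_const_zero]

lemma CD_mulVec_one (n : ℕ) (S : Matrix (Fin p) (Fin p) ℝ) (w : TrtSeq p t → ℝ)
    (i j : Fin 2) : CD n S w i j *ᵥ 1 = 0 := by
  have hmean : centredMean w j *ᵥ 1 = 0 := by
    simp only [centredMean, sum_mulVec, smul_mulVec, ← mulVec_mulVec, Bmat_mulVec_one,
      mulVec_zero, smul_zero, Finset.sum_const_zero]
  rw [CD_eq_ChatD_sub, sub_mulVec, ChatD_mulVec_one, smul_mulVec, ← mulVec_mulVec, hmean,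
    mulVec_zero, smul_zero, sub_zero]

lemma quadPencil_Chat_posSemidef (hS : S.PosDef) (s : TrtSeq p t) (x : ℝ) :
    (quadPencil (Chat S s) x).PosSemidef := by
  have := quadPencil_transpose_mul_mul_posSemidef (fun i => Gmat i s * Bmat t)
    (Btil_posSemidef hS) x
  simpa only [← Chat_eq_transpose_mul_mul] using this

lemma trace_quadPencil_Chat (hS : S.PosDef) (s : TrtSeq p t) (x : ℝ) :
    (quadPencil (Chat S s) x).trace = qSeq S s x := by
  have hcomm : (Chat S s 1 0).trace = (Chat S s 0 1).trace := by
    rw [← Chat_transpose hS, trace_transpose]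
  simp only [quadPencil, trace_add, trace_smul, smul_eq_mul, hcomm, qSeq, cseq]
  ring

lemma quadPencil_ChatD (n : ℕ) (S : Matrix (Fin p) (Fin p) ℝ) (w : TrtSeq p t → ℝ) (x : ℝ) :
    quadPencil (ChatD n S w) x = (n : ℝ) • ∑ s, w s • quadPencil (Chat S s) x := by
  simp only [quadPencil, ChatD, Finset.smul_sum, ← Finset.sum_add_distrib]
  exact Finset.sum_congr rfl fun s _ => by module

lemma quadPencil_ChatD_posSemidef (n : ℕ) (hS : S.PosDef) (hw : ∀ s, 0 ≤ w s) (x : ℝ) :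
    (quadPencil (ChatD n S w) x).PosSemidef := by
  rw [quadPencil_ChatD]
  exact (posSemidef_sum _ fun s _ => (quadPencil_Chat_posSemidef hS s x).smul (hw s)).smul
    (Nat.cast_nonneg n)

lemma trace_quadPencil_ChatD (n : ℕ) (hS : S.PosDef) (w : TrtSeq p t → ℝ) (x : ℝ) :
    (quadPencil (ChatD n S w) x).trace = n * qD S w x := by
  simp only [quadPencil_ChatD, trace_smul, trace_sum, trace_quadPencil_Chat hS, smul_eq_mul, qD]

lemma quadPencil_ChatD_sub_quadPencil_CD_posSemidef (n : ℕ) (hS : S.PosDef)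
    (w : TrtSeq p t → ℝ) (x : ℝ) :
    (quadPencil (ChatD n S w) x - quadPencil (CD n S w) x).PosSemidef := by
  have hsub : quadPencil (ChatD n S w) x - quadPencil (CD n S w) x =
      (n : ℝ) • quadPencil (fun i j => (centredMean w i)ᵀ * Btil S * centredMean w j) x := by
    simp only [quadPencil, CD_eq_ChatD_sub]
    module
  exact hsub ▸ (quadPencil_transpose_mul_mul_posSemidef _ (Btil_posSemidef hS) x).smul
    (Nat.cast_nonneg n)

lemma CInfo_eq_quadPencil_sub (n : ℕ) (hS : S.PosDef) (w : TrtSeq p t → ℝ) (τ : Fin t → ℝ)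
    (l0 : ℝ) : CInfo n S w τ l0 = quadPencil (CD n S w) l0 - (τ ⬝ᵥ CD n S w 1 1 *ᵥ τ)⁻¹ •
      vecMulVec ((CD n S w 0 1 + l0 • CD n S w 1 1) *ᵥ τ)
        ((CD n S w 0 1 + l0 • CD n S w 1 1) *ᵥ τ) := by
  rw [CInfo, quadPencil, mul_vecMulVec, vecMulVec_mul, ← mulVec_transpose, transpose_add,
    transpose_smul, CD_transpose hS, CD_transpose hS]

lemma CInfo_isHermitian (n : ℕ) (hS : S.PosDef) (w : TrtSeq p t → ℝ) (τ : Fin t → ℝ) (l0 : ℝ) :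
    (CInfo n S w τ l0).IsHermitian := by
  rw [IsHermitian, conjTranspose_eq_transpose_of_trivial, CInfo_eq_quadPencil_sub n hS,
    transpose_sub, quadPencil_transpose (CD_transpose hS w), transpose_smul, transpose_vecMulVec]

lemma CInfo_mulVec_one (n : ℕ) (S : Matrix (Fin p) (Fin p) ℝ) (w : TrtSeq p t → ℝ)
    (τ : Fin t → ℝ) (l0 : ℝ) : CInfo n S w τ l0 *ᵥ 1 = 0 := by
  simp only [CInfo, sub_mulVec, add_mulVec, smul_mulVec, CD_mulVec_one, ← mulVec_mulVec,
    mulVec_zero, smul_zero, add_zero, sub_zero]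

lemma dotProduct_CInfo_mulVec_le (hS : S.PosDef) (hτ : 0 < τ ⬝ᵥ CD n S w 1 1 *ᵥ τ) (l0 x : ℝ) :
    τ ⬝ᵥ CInfo n S w τ l0 *ᵥ τ ≤ τ ⬝ᵥ quadPencil (CD n S w) x *ᵥ τ := by
  have hcomm : τ ⬝ᵥ CD n S w 1 0 *ᵥ τ = τ ⬝ᵥ CD n S w 0 1 *ᵥ τ := by
    rw [← CD_transpose hS w 0 1, mulVec_transpose, dotProduct_comm, ← dotProduct_mulVec]
  set a := τ ⬝ᵥ CD n S w 0 0 *ᵥ τ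
  set b := τ ⬝ᵥ CD n S w 0 1 *ᵥ τ
  set c := τ ⬝ᵥ CD n S w 1 1 *ᵥ τ with hc
  have hpencil : ∀ y, τ ⬝ᵥ quadPencil (CD n S w) y *ᵥ τ = a + 2 * b * y + c * y ^ 2 := fun y => by
    simp only [quadPencil, add_mulVec, smul_mulVec, dotProduct_add, dotProduct_smul, hcomm,
      smul_eq_mul, a, b, c]
    ring
  have hslope : τ ⬝ᵥ (CD n S w 0 1 + l0 • CD n S w 1 1) *ᵥ τ = b + l0 * c := by
    simp only [add_mulVec, smul_mulVec, dotProduct_add, dotProduct_smul, smul_eq_mul, b, c]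
  have hinfo : τ ⬝ᵥ CInfo n S w τ l0 *ᵥ τ = a + 2 * b * l0 + c * l0 ^ 2 -
      c⁻¹ * (b + l0 * c) ^ 2 := by
    rw [CInfo_eq_quadPencil_sub n hS, ← hc, sub_mulVec, dotProduct_sub, hpencil, smul_mulVec,
      dotProduct_smul, vecMulVec_mulVec, op_smul_eq_smul, dotProduct_smul, dotProduct_comm _ τ,
      hslope, smul_eq_mul, smul_eq_mul, sq (b + l0 * c)]
  rw [hpencil, hinfo]
  clear_value a b c
  have hsquare : a + 2 * b * x + c * x ^ 2 - (a + 2 * b * l0 + c * l0 ^ 2 -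
      c⁻¹ * (b + l0 * c) ^ 2) = c⁻¹ * (b + x * c) ^ 2 := by
    field_simp
    ring
  have : 0 ≤ c⁻¹ * (b + x * c) ^ 2 := by positivity
  linarith

lemma trace_mul_lineProj_nonneg {N : Matrix (Fin t) (Fin t) ℝ} (hN : N.PosSemidef)
    (τ : Fin t → ℝ) : 0 ≤ (N * lineProj τ).trace := by
  have h := trace_mul_posSemidef_mul_transpose_nonneg hN (lineProj τ)
  rwa [lineProj_transpose, mul_assoc, trace_mul_comm, mul_assoc, lineProj_mul_self] at h

lemma trace_mul_lineProj_le_trace {N : Matrix (Fin t) (Fin t) ℝ} (hN : N.PosSemidef)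
    (τ : Fin t → ℝ) : (N * lineProj τ).trace ≤ N.trace := by
  have h := trace_mul_posSemidef_mul_transpose_nonneg hN (1 - lineProj τ)
  have hidem : (1 - lineProj τ) * (1 - lineProj τ) = 1 - lineProj τ := by
    simp only [mul_sub, sub_mul, mul_one, one_mul, lineProj_mul_self, sub_self, sub_zero]
  rw [transpose_sub, transpose_one, lineProj_transpose, mul_assoc, trace_mul_comm, mul_assoc,
    hidem, mul_sub, mul_one, trace_sub] at h
  linarith

lemma trace_CInfo_mul_lineProj_le (hS : S.PosDef) (hτ : 0 < τ ⬝ᵥ CD n S w 1 1 *ᵥ τ) (l0 x : ℝ) :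
    (CInfo n S w τ l0 * lineProj τ).trace ≤ (quadPencil (ChatD n S w) x * lineProj τ).trace := by
  have hττ : 0 ≤ (τ ⬝ᵥ τ)⁻¹ :=
    inv_nonneg.mpr (Finset.sum_nonneg fun i _ => mul_self_nonneg (τ i))
  calc (CInfo n S w τ l0 * lineProj τ).trace
      ≤ (quadPencil (CD n S w) x * lineProj τ).trace := by
        rw [trace_mul_lineProj, trace_mul_lineProj]
        exact mul_le_mul_of_nonneg_left (dotProduct_CInfo_mulVec_le hS hτ l0 x) hττ
    _ ≤ (quadPencil (ChatD n S w) x * lineProj τ).trace := by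
        have h := trace_mul_lineProj_nonneg
          (quadPencil_ChatD_sub_quadPencil_CD_posSemidef n hS w x) τ
        rwa [sub_mul, trace_sub, sub_nonneg] at h

lemma trace_CInfo_sub_trace_mul_lineProj_le (hS : S.PosDef) (hτ : 0 < τ ⬝ᵥ CD n S w 1 1 *ᵥ τ)
    (l0 : ℝ) : (CInfo n S w τ l0).trace - (CInfo n S w τ l0 * lineProj τ).trace ≤
      (quadPencil (ChatD n S w) l0).trace - (quadPencil (ChatD n S w) l0 * lineProj τ).trace := by
  have hpsd : (quadPencil (ChatD n S w) l0 - CInfo n S w τ l0).PosSemidef := by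
    set v := (CD n S w 0 1 + l0 • CD n S w 1 1) *ᵥ τ with hv
    have hrank : (vecMulVec v v).PosSemidef := by
      simpa only [star_trivial] using posSemidef_vecMulVec_self_star v
    rw [CInfo_eq_quadPencil_sub n hS, ← hv, ← sub_add]
    exact (quadPencil_ChatD_sub_quadPencil_CD_posSemidef n hS w l0).add
      (hrank.smul (inv_pos.mpr hτ).le)
  have h := trace_mul_lineProj_le_trace hpsd τ
  rw [sub_mul, trace_sub, trace_sub] at h
  linarith

lemma PhiA_CInfo_mul_sq_le (hS : S.PosDef) (hw : ∀ s, 0 ≤ w s) (hτ : ∑ i, τ i = 0) (hτ0 : τ ≠ 0)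
    (hτC : 0 < τ ⬝ᵥ CD n S w 1 1 *ᵥ τ) (l0 x α β : ℝ) :
    PhiA (CInfo n S w τ l0) * (α + (t - 2) * β) ^ 2 ≤
      (t - 1) * (α ^ 2 * (quadPencil (ChatD n S w) x * lineProj τ).trace +
        β ^ 2 * ((quadPencil (ChatD n S w) l0).trace -
          (quadPencil (ChatD n S w) l0 * lineProj τ).trace)) := by
  have : NeZero t := ⟨(two_le_of_sum_eq_zero hτ hτ0).trans_lt' two_pos |>.ne'⟩
  have ht1 : 0 ≤ (t : ℝ) - 1 := sub_nonneg.mpr (Nat.one_le_cast.mpr NeZero.one_le)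
  by_cases hPhi : PhiA (CInfo n S w τ l0) = 0
  · rw [hPhi, zero_mul]
    have hx := trace_mul_lineProj_nonneg (quadPencil_ChatD_posSemidef n hS hw x) τ
    have hl0 := sub_nonneg.mpr
      (trace_mul_lineProj_le_trace (quadPencil_ChatD_posSemidef n hS hw l0) τ)
    positivity
  · have hbound := PhiA_mul_sq_trace_le (CInfo_isHermitian n hS w τ l0)
      (CInfo_mulVec_one n S w τ l0) (axialMat_mulVec_one hτ α β) hPhi
    rw [trace_axialMat hτ hτ0, trace_axialMat_mul_mul_axialMat hτ (CInfo_mulVec_one n S w τ l0)]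
      at hbound
    have hline := trace_CInfo_mul_lineProj_le hS hτC l0 x
    have hcompl := trace_CInfo_sub_trace_mul_lineProj_le hS hτC l0
    exact hbound.trans (by gcongr)

lemma PhiCrit_mul_sq_le {g : Measure (Fin t → ℝ)} {l0 : ℝ} (hS : S.PosDef)
    (hg : IsIsotropicPrior g) (hw : PhiAdmissible n S PhiA g l0 w) (x α β : ℝ) :
    PhiCrit n S PhiA g l0 w * (α + (t - 2) * β) ^ 2 ≤
      n * (α ^ 2 * qD S w x + (t - 2) * β ^ 2 * qD S w l0) := by
  have := hg.isProbabilityMeasure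
  obtain ⟨hdesign, hpos, hint⟩ := hw
  have ht1 : (t : ℝ) - 1 ≠ 0 := by
    rw [sub_ne_zero]
    exact_mod_cast (hg.two_le.trans_lt' one_lt_two).ne'
  set Mx := quadPencil (ChatD n S w) x with hMx
  set Ml := quadPencil (ChatD n S w) l0 with hMl
  have hMx1 : Mx *ᵥ 1 = 0 := quadPencil_mulVec_eq_zero (ChatD_mulVec_one n S w) x
  have hMl1 : Ml *ᵥ 1 = 0 := quadPencil_mulVec_eq_zero (ChatD_mulVec_one n S w) l0
  have hintx := (hg.integrable_trace_mul_lineProj Mx).const_mul (α ^ 2)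
  have hintl : Integrable (fun τ => β ^ 2 * (Ml.trace - (Ml * lineProj τ).trace)) g :=
    ((integrable_const _).sub (hg.integrable_trace_mul_lineProj Ml)).const_mul _
  calc PhiCrit n S PhiA g l0 w * (α + (t - 2) * β) ^ 2
      = ∫ τ, PhiA (CInfo n S w τ l0) * (α + (t - 2) * β) ^ 2 ∂g := (integral_mul_const _ _).symm
    _ ≤ ∫ τ, (t - 1) * (α ^ 2 * (Mx * lineProj τ).trace +
          β ^ 2 * (Ml.trace - (Ml * lineProj τ).trace)) ∂g := by
        refine integral_mono_ae (hint.mul_const _) ((hintx.add hintl).const_mul _) ?_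
        filter_upwards [hg.ae_contrast, hpos] with τ hτ hτC
        exact PhiA_CInfo_mul_sq_le hS hdesign.1 hτ.1 hτ.2 hτC l0 x α β
    _ = (t - 1) * (α ^ 2 * (Mx.trace / (t - 1)) + β ^ 2 * (Ml.trace - Ml.trace / (t - 1))) := by
        rw [integral_const_mul, integral_add hintx hintl, integral_const_mul, integral_const_mul,
          integral_sub (integrable_const _) (hg.integrable_trace_mul_lineProj Ml),
          hg.integral_trace_mul_lineProj hMx1, hg.integral_trace_mul_lineProj hMl1, integral_const,
          probReal_univ, one_smul]
    _ = n * (α ^ 2 * qD S w x + (t - 2) * β ^ 2 * qD S w l0) := by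
        rw [hMx, hMl, trace_quadPencil_ChatD n hS, trace_quadPencil_ChatD n hS]
        field_simp
        ring

end Information

/-! ### Balanced designs -/

/-- A design whose centred incidence matrices average to zero and whose matrices `Ĉ_{dij}` are
multiples of the centring matrix. These are the properties of pseudo symmetric designs that
determine the information matrices, and they are preserved by mixing designs. -/
structure IsBalanced {p t : ℕ} (n : ℕ) (S : Matrix (Fin p) (Fin p) ℝ) (w : TrtSeq p t → ℝ) :
    Prop where
  isDesign : IsDesign w
  centredMean_eq_zero : ∀ i, centredMean w i = 0
  ChatD_eq : ∀ i j, ChatD n S w i j = (cD n S w i j / (t - 1)) • Bmat t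

section Balanced

variable {p t n : ℕ} {S : Matrix (Fin p) (Fin p) ℝ} {w : TrtSeq p t → ℝ} {τ : Fin t → ℝ}
  {l0 : ℝ}

lemma centredMean_eq_sum_mul (w : TrtSeq p t → ℝ) (i : Fin 2) :
    centredMean w i = (∑ s, w s • Gmat i s) * Bmat t := by
  simp only [centredMean, Matrix.sum_mul, Matrix.smul_mul]

lemma IsPseudoSymmetric.isBalanced (hps : IsPseudoSymmetric n S w) (ht : 2 ≤ t)
    (hw : IsDesign w) : IsBalanced n S w := by
  have hrep : ∀ k a, ∑ s, w s * (if s k = a then (1 : ℝ) else 0) = 1 / t := fun k a => by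
    simpa only [mul_ite, mul_one, mul_zero, Finset.sum_filter] using hps.1 k a
  have hmean : ∀ i, centredMean w i = 0 := fun i => by
    rw [centredMean_eq_sum_mul]
    refine mul_Bmat_eq_zero fun k a b => ?_
    simp only [Matrix.sum_apply, Matrix.smul_apply, smul_eq_mul, Gmat]
    split_ifs
    · simp only [Tmat, of_apply, hrep]
    · simp only [Fmat, of_apply]
      split_ifs
      · rfl
      · simp only [hrep]
  refine ⟨hw, hmean, fun i j => ?_⟩
  obtain ⟨a, b, hab⟩ := hps.2 i j
  rw [CD_eq_ChatD_sub, hmean i, transpose_zero, Matrix.zero_mul, Matrix.zero_mul, smul_zero,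
    sub_zero] at hab
  exact eq_smul_Bmat_of_completelySymmetric ht hab (ChatD_mulVec_one n S w i j)

lemma cD_comm (n : ℕ) (hS : S.PosDef) (w : TrtSeq p t → ℝ) (i j : Fin 2) :
    cD n S w i j = cD n S w j i := by
  rw [cD, cD, ← ChatD_transpose hS, trace_transpose]

lemma natCast_mul_qD (n : ℕ) (hS : S.PosDef) (w : TrtSeq p t → ℝ) (y : ℝ) :
    n * qD S w y = cD n S w 0 0 + 2 * cD n S w 0 1 * y + cD n S w 1 1 * y ^ 2 := by
  rw [← trace_quadPencil_ChatD n hS, quadPencil, trace_add, trace_add, trace_smul, trace_smul,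
    trace_add, ← cD, ← cD, ← cD, ← cD, cD_comm n hS w 1 0, smul_eq_mul, smul_eq_mul]
  ring

lemma natCast_mul_qD_xD (n : ℕ) (hS : S.PosDef) (w : TrtSeq p t → ℝ) :
    n * qD S w (xD n S w) = cD n S w 0 0 - cD n S w 0 1 ^ 2 / cD n S w 1 1 := by
  rw [natCast_mul_qD n hS, xD]
  rcases eq_or_ne (cD n S w 1 1) 0 with h | h
  · simp [h]
  · field_simp
    ring

lemma natCast_mul_qD_sub_qD_xD (hS : S.PosDef) (hc : cD n S w 1 1 ≠ 0) (y : ℝ) :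
    n * (qD S w y - qD S w (xD n S w)) = (cD n S w 0 1 + y * cD n S w 1 1) ^ 2 / cD n S w 1 1 := by
  rw [mul_sub, natCast_mul_qD n hS, natCast_mul_qD_xD n hS]
  generalize cD n S w 1 1 = c at hc ⊢
  field_simp
  ring

lemma natCast_pos_of_cD_ne_zero {i j : Fin 2} (hc : cD n S w i j ≠ 0) : (0 : ℝ) < n := by
  refine Nat.cast_pos.mpr (Nat.pos_of_ne_zero ?_)
  rintro rfl
  exact hc (by rw [cD, ChatD, Nat.cast_zero, zero_smul, trace_zero])

lemma qD_xD_le (hS : S.PosDef) (hc : 0 < cD n S w 1 1) (y : ℝ) :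
    qD S w (xD n S w) ≤ qD S w y := by
  have hsq : 0 ≤ n * (qD S w y - qD S w (xD n S w)) := by
    rw [natCast_mul_qD_sub_qD_xD hS hc.ne']
    exact div_nonneg (sq_nonneg _) hc.le
  exact sub_nonneg.mp (nonneg_of_mul_nonneg_right hsq (natCast_pos_of_cD_ne_zero hc.ne'))

namespace IsBalanced

lemma CD_eq (hw : IsBalanced n S w) (i j : Fin 2) :
    CD n S w i j = (cD n S w i j / (t - 1)) • Bmat t := by
  rw [CD_eq_ChatD_sub, hw.centredMean_eq_zero i, hw.ChatD_eq, transpose_zero, Matrix.zero_mul,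
    Matrix.zero_mul, smul_zero, sub_zero]

lemma CD_mulVec (hw : IsBalanced n S w) (hτ : ∑ i, τ i = 0) (i j : Fin 2) :
    CD n S w i j *ᵥ τ = (cD n S w i j / (t - 1)) • τ := by
  rw [hw.CD_eq, smul_mulVec, Bmat_mulVec_of_sum_eq_zero hτ]

lemma dotProduct_CD_mulVec_pos (hw : IsBalanced n S w) (hτ : ∑ i, τ i = 0) (hτ0 : τ ≠ 0)
    {i j : Fin 2} (hc : 0 < cD n S w i j) : 0 < τ ⬝ᵥ CD n S w i j *ᵥ τ := by
  have hττ : 0 < τ ⬝ᵥ τ := by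
    simpa only [star_trivial] using dotProduct_star_self_pos_iff.mpr hτ0
  have ht1 : (0 : ℝ) < t - 1 := by
    rw [sub_pos]
    exact_mod_cast two_le_of_sum_eq_zero hτ hτ0
  rw [hw.CD_mulVec hτ, dotProduct_smul, smul_eq_mul]
  positivity

lemma quadPencil_CD_eq (hS : S.PosDef) (hw : IsBalanced n S w) (y : ℝ) :
    quadPencil (CD n S w) y = (n * qD S w y / (t - 1)) • Bmat t := by
  rw [quadPencil, hw.CD_eq, hw.CD_eq, hw.CD_eq, hw.CD_eq, cD_comm n hS w 1 0,
    natCast_mul_qD n hS]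
  module

lemma CInfo_eq_axialMat (hS : S.PosDef) (hw : IsBalanced n S w) (hc : cD n S w 1 1 ≠ 0)
    (hτ : ∑ i, τ i = 0) : CInfo n S w τ l0 =
      axialMat τ (n * qD S w (xD n S w) / (t - 1)) (n * qD S w l0 / (t - 1)) := by
  have hgap := natCast_mul_qD_sub_qD_xD hS hc l0
  have hv : (CD n S w 0 1 + l0 • CD n S w 1 1) *ᵥ τ =
      ((cD n S w 0 1 + l0 * cD n S w 1 1) / (t - 1)) • τ := by
    rw [add_mulVec, smul_mulVec, hw.CD_mulVec hτ, hw.CD_mulVec hτ]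
    module
  have hloss : (τ ⬝ᵥ CD n S w 1 1 *ᵥ τ)⁻¹ • vecMulVec ((CD n S w 0 1 + l0 • CD n S w 1 1) *ᵥ τ)
      ((CD n S w 0 1 + l0 • CD n S w 1 1) *ᵥ τ) =
        (n * (qD S w l0 - qD S w (xD n S w)) / (t - 1)) • lineProj τ := by
    rw [hv, hw.CD_mulVec hτ, dotProduct_smul, smul_vecMulVec, vecMulVec_smul, lineProj, smul_smul,
      smul_smul, smul_smul, hgap, smul_eq_mul]
    congr 1
    field_simp
  rw [CInfo_eq_quadPencil_sub n hS, hw.quadPencil_CD_eq hS, hloss, axialMat]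
  module

variable {g : Measure (Fin t → ℝ)}

lemma ae_PhiA_CInfo_eq (hS : S.PosDef) (hg : IsIsotropicPrior g) (hw : IsBalanced n S w)
    (hc : 0 < cD n S w 1 1) (hx : 0 < qD S w (xD n S w)) :
    (fun τ => PhiA (CInfo n S w τ l0)) =ᵐ[g] fun _ =>
      n * ((qD S w (xD n S w))⁻¹ + (t - 2) * (qD S w l0)⁻¹)⁻¹ := by
  have hn := natCast_pos_of_cD_ne_zero hc.ne'
  have hl0 := hx.trans_le (qD_xD_le hS hc l0)
  have ht1 : (0 : ℝ) < t - 1 := by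
    rw [sub_pos]
    exact_mod_cast hg.two_le
  filter_upwards [hg.ae_contrast] with τ ⟨hτ, hτ0⟩
  rw [hw.CInfo_eq_axialMat hS hc.ne' hτ, PhiA_axialMat hτ hτ0 (by positivity) (by positivity),
    inv_div, inv_div]
  have hscale : (t - 1) / (n * qD S w (xD n S w)) + (t - 2) * ((t - 1) / (n * qD S w l0)) =
      ((t - 1) / n) * ((qD S w (xD n S w))⁻¹ + (t - 2) * (qD S w l0)⁻¹) := by
    field_simp
  rw [hscale, mul_inv, inv_div, ← mul_assoc, mul_div_cancel₀ _ ht1.ne']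

lemma phiAdmissible (hS : S.PosDef) (hg : IsIsotropicPrior g) (hw : IsBalanced n S w)
    (hc : 0 < cD n S w 1 1) (hx : 0 < qD S w (xD n S w)) : PhiAdmissible n S PhiA g l0 w := by
  have := hg.isProbabilityMeasure
  refine ⟨hw.isDesign, ?_, (integrable_const _).congr (hw.ae_PhiA_CInfo_eq hS hg hc hx).symm⟩
  filter_upwards [hg.ae_contrast] with τ hτ
  exact hw.dotProduct_CD_mulVec_pos hτ.1 hτ.2 hc

lemma phiCrit_eq (hS : S.PosDef) (hg : IsIsotropicPrior g) (hw : IsBalanced n S w)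
    (hc : 0 < cD n S w 1 1) (hx : 0 < qD S w (xD n S w)) : PhiCrit n S PhiA g l0 w =
      n * ((qD S w (xD n S w))⁻¹ + (t - 2) * (qD S w l0)⁻¹)⁻¹ := by
  have := hg.isProbabilityMeasure
  rw [PhiCrit, integral_congr_ae (hw.ae_PhiA_CInfo_eq hS hg hc hx), integral_const, probReal_univ,
    one_smul]

end IsBalanced

end Balanced

/-! ### Symmetric designs and mixtures -/

section Symmetric

variable {p t n : ℕ} {S : Matrix (Fin p) (Fin p) ℝ} {w : TrtSeq p t → ℝ}

lemma sum_comp_permSeq {M : Type*} [AddCommMonoid M] (σ : Equiv.Perm (Fin t))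
    (f : TrtSeq p t → M) : ∑ s, f (permSeq σ s) = ∑ s, f s :=
  Equiv.sum_comp (Equiv.piCongrRight fun _ => σ) f

lemma isSymmetricDesign_symmetrize (w : TrtSeq p t → ℝ) : IsSymmetricDesign (symmetrize w) := by
  intro π s
  simp only [symmetrize, permDesign]
  rw [← Equiv.sum_comp (Equiv.mulLeft π) fun σ => w (permSeq σ⁻¹ (permSeq π s))]
  congr 1
  refine Finset.sum_congr rfl fun σ _ => congrArg w ?_
  ext1 k
  simp [permSeq]

lemma sum_symmetrize_mul (w : TrtSeq p t → ℝ) {f : TrtSeq p t → ℝ}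
    (hf : ∀ σ s, f (permSeq σ s) = f s) : ∑ s, symmetrize w s * f s = ∑ s, w s * f s := by
  have hperm : ∀ σ, ∑ s, permDesign σ w s * f s = ∑ s, w s * f s := fun σ => by
    rw [← sum_comp_permSeq σ⁻¹ fun s => w s * f s]
    simp only [permDesign, hf]
  calc ∑ s, symmetrize w s * f s
      = (t.factorial : ℝ)⁻¹ * ∑ σ, ∑ s, permDesign σ w s * f s := by
        simp only [symmetrize, mul_assoc, Finset.sum_mul, ← Finset.mul_sum]
        rw [Finset.sum_comm]
    _ = ∑ s, w s * f s := by
        simp [hperm, Fintype.card_perm, Nat.factorial_ne_zero]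

lemma IsDesign.symmetrize (hw : IsDesign w) : IsDesign (symmetrize w) := by
  refine ⟨fun s => mul_nonneg (by positivity) (Finset.sum_nonneg fun σ _ => hw.1 _), ?_⟩
  simpa only [mul_one, hw.2] using sum_symmetrize_mul w (f := fun _ => 1) fun _ _ => rfl

lemma Gmat_permSeq (σ : Equiv.Perm (Fin t)) (s : TrtSeq p t) (i : Fin 2) :
    Gmat i (permSeq σ s) = (Gmat i s).submatrix id σ.symm := by
  ext k a
  simp only [Gmat, Tmat, Fmat, permSeq, submatrix_apply, id]
  simp only [← Equiv.eq_symm_apply]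
  split_ifs <;> simp only [of_apply]

lemma Bmat_submatrix (σ : Equiv.Perm (Fin t)) : (Bmat t).submatrix σ σ = Bmat t := by
  ext a b
  simp [Bmat, Jmat, one_apply]

lemma Chat_permSeq (S : Matrix (Fin p) (Fin p) ℝ) (σ : Equiv.Perm (Fin t)) (s : TrtSeq p t)
    (i j : Fin 2) : Chat S (permSeq σ s) i j = (Chat S s i j).submatrix σ.symm σ.symm := by
  have hcentred : ∀ i, Gmat i (permSeq σ s) * Bmat t = (Gmat i s * Bmat t).submatrix id σ.symm :=
    fun i => by
      rw [Gmat_permSeq, ← submatrix_mul_equiv _ _ _ σ.symm, Bmat_submatrix]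
  rw [Chat_eq_transpose_mul_mul, Chat_eq_transpose_mul_mul, hcentred, hcentred,
    transpose_submatrix]
  rfl

lemma qSeq_permSeq (S : Matrix (Fin p) (Fin p) ℝ) (σ : Equiv.Perm (Fin t)) (s : TrtSeq p t)
    (y : ℝ) : qSeq S (permSeq σ s) y = qSeq S s y := by
  have hcseq : ∀ i j, cseq S (permSeq σ s) i j = cseq S s i j := fun i j => by
    rw [cseq, cseq, Chat_permSeq]
    exact Equiv.sum_comp σ.symm fun a => Chat S s i j a a
  simp only [qSeq, hcseq]

lemma IsSymmetricDesign.sum_smul_permSeq {M : Type*} [AddCommGroup M] [Module ℝ M]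
    (hw : IsSymmetricDesign w) (σ : Equiv.Perm (Fin t)) (f : TrtSeq p t → M) :
    ∑ s, w s • f (permSeq σ s) = ∑ s, w s • f s := by
  simpa only [hw σ] using sum_comp_permSeq σ fun s => w s • f s

lemma IsSymmetricDesign.isBalanced (hsymm : IsSymmetricDesign w) (hw : IsDesign w) (ht : 2 ≤ t)
    (n : ℕ) (S : Matrix (Fin p) (Fin p) ℝ) : IsBalanced n S w := by
  refine ⟨hw, fun i => ?_, fun i j => ?_⟩
  · rw [centredMean_eq_sum_mul]
    refine mul_Bmat_eq_zero fun k a b => ?_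
    have hinv := congrFun₂ (hsymm.sum_smul_permSeq (Equiv.swap a b) (Gmat i)) k b
    simpa [Gmat_permSeq, Matrix.sum_apply] using hinv
  · refine eq_smul_Bmat_of_perm_invariant ht (fun σ a b => ?_) (ChatD_mulVec_one n S w i j)
    have hinv := congrFun₂ (hsymm.sum_smul_permSeq σ.symm fun s => Chat S s i j) a b
    simpa [ChatD, Chat_permSeq, Matrix.sum_apply] using congrArg ((n : ℝ) * ·) hinv

lemma sum_mix_smul {M : Type*} [AddCommGroup M] [Module ℝ M] (f : TrtSeq p t → M)
    (w u : TrtSeq p t → ℝ) (a b : ℝ) :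
    ∑ s, (a • w + b • u) s • f s = a • ∑ s, w s • f s + b • ∑ s, u s • f s := by
  simp only [Pi.add_apply, Pi.smul_apply, smul_eq_mul, add_smul, mul_smul, Finset.sum_add_distrib,
    Finset.smul_sum]

lemma ChatD_mix (n : ℕ) (S : Matrix (Fin p) (Fin p) ℝ) (w u : TrtSeq p t → ℝ) (a b : ℝ)
    (i j : Fin 2) :
    ChatD n S (a • w + b • u) i j = a • ChatD n S w i j + b • ChatD n S u i j := by
  rw [ChatD, ChatD, ChatD, sum_mix_smul]
  module

lemma cD_mix (n : ℕ) (S : Matrix (Fin p) (Fin p) ℝ) (w u : TrtSeq p t → ℝ) (a b : ℝ)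
    (i j : Fin 2) : cD n S (a • w + b • u) i j = a • cD n S w i j + b • cD n S u i j := by
  rw [cD, ChatD_mix, trace_add, trace_smul, trace_smul, cD, cD]

lemma qD_mix (S : Matrix (Fin p) (Fin p) ℝ) (w u : TrtSeq p t → ℝ) (a b y : ℝ) :
    qD S (a • w + b • u) y = a • qD S w y + b • qD S u y :=
  sum_mix_smul (qSeq S · y) w u a b

lemma convex_setOf_isBalanced (n : ℕ) (S : Matrix (Fin p) (Fin p) ℝ) :
    Convex ℝ {w : TrtSeq p t → ℝ | IsBalanced n S w} := by
  intro w hw u hu a b ha hb hab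
  refine ⟨convex_stdSimplex ℝ _ hw.isDesign hu.isDesign ha hb hab, fun i => ?_, fun i j => ?_⟩
  · rw [centredMean, sum_mix_smul, ← centredMean, ← centredMean, hw.centredMean_eq_zero,
      hu.centredMean_eq_zero, smul_zero, smul_zero, add_zero]
  · rw [ChatD_mix, cD_mix, hw.ChatD_eq, hu.ChatD_eq, smul_eq_mul, smul_eq_mul]
    module

lemma cD_lineMap (n : ℕ) (S : Matrix (Fin p) (Fin p) ℝ) (w u : TrtSeq p t → ℝ) (e : ℝ)
    (i j : Fin 2) : cD n S (AffineMap.lineMap w u e) i j =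
      AffineMap.lineMap (cD n S w i j) (cD n S u i j) e := by
  rw [AffineMap.lineMap_apply_module, AffineMap.lineMap_apply_module, cD_mix]

lemma qD_lineMap (S : Matrix (Fin p) (Fin p) ℝ) (w u : TrtSeq p t → ℝ) (e y : ℝ) :
    qD S (AffineMap.lineMap w u e) y = AffineMap.lineMap (qD S w y) (qD S u y) e := by
  rw [AffineMap.lineMap_apply_module, AffineMap.lineMap_apply_module, qD_mix]

end Symmetric

/-! ### The equivalence theorem -/

section StdSimplex

variable {ι : Type*} [Fintype ι] {w f : ι → ℝ} {c : ℝ}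

lemma sum_mul_le_of_mem_stdSimplex (hw : w ∈ stdSimplex ℝ ι) (hf : ∀ i, f i ≤ c) :
    ∑ i, w i * f i ≤ c :=
  calc ∑ i, w i * f i ≤ ∑ i, w i * c :=
        Finset.sum_le_sum fun i _ => mul_le_mul_of_nonneg_left (hf i) (hw.1 i)
    _ = c := by rw [← Finset.sum_mul, hw.2, one_mul]

lemma sSup_range_eq_iff_of_mem_stdSimplex (hw : w ∈ stdSimplex ℝ ι)
    (hmean : ∑ i, w i * f i = c) : sSup (Set.range f) = c ↔ ∀ i, f i ≤ c := by
  have hle : ∀ i, f i ≤ sSup (Set.range f) := fun i =>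
    le_csSup (Set.finite_range f).bddAbove (Set.mem_range_self i)
  have : Nonempty ι :=
    Finset.univ_nonempty_iff.mp (Finset.nonempty_of_sum_ne_zero (hw.2.trans_ne one_ne_zero))
  refine ⟨fun h i => h ▸ hle i, fun h => le_antisymm ?_ ?_⟩
  · exact csSup_le (Set.range_nonempty f) (Set.forall_mem_range.mpr h)
  · exact hmean.symm.trans_le (sum_mul_le_of_mem_stdSimplex hw hle)

lemma eq_of_mem_stdSimplex_of_sum_mul_eq (hw : w ∈ stdSimplex ℝ ι)
    (hmean : ∑ i, w i * f i = c) (hf : ∀ i, f i ≤ c) {i : ι} (hi : 0 < w i) : f i = c := by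
  have hsum : ∑ i, w i * f i = ∑ i, w i * c := by
    rw [hmean, ← Finset.sum_mul, hw.2, one_mul]
  have hterm := (Finset.sum_eq_sum_iff_of_le fun i _ =>
    mul_le_mul_of_nonneg_left (hf i) (hw.1 i)).mp hsum i (Finset.mem_univ i)
  exact mul_left_cancel₀ hi.ne' hterm

end StdSimplex

section Equivalence

variable {p t n : ℕ} {S : Matrix (Fin p) (Fin p) ℝ} {w u : TrtSeq p t → ℝ}
  {g : Measure (Fin t → ℝ)} {l0 : ℝ}

/-- The function `π_d q_s(x_d)/q_d(x_d) + (1 - π_d) q_s(λ0)/q_d(λ0)` of a sequence `s`, where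
`π_d = q_d(λ0)/(q_d(λ0) + (t-2) q_d(x_d))`. Up to a positive factor, its excess over `1` is the
derivative of the A-criterion as weight moves from `w` to the relabellings of `s`. -/
def sensitivity {p t : ℕ} (n : ℕ) (S : Matrix (Fin p) (Fin p) ℝ) (w : TrtSeq p t → ℝ) (l0 : ℝ)
    (s : TrtSeq p t) : ℝ :=
  (qD S w l0 / (qD S w l0 + ((t : ℝ) - 2) * qD S w (xD n S w))) *
      (qSeq S s (xD n S w) / qD S w (xD n S w)) +
    (1 - qD S w l0 / (qD S w l0 + ((t : ℝ) - 2) * qD S w (xD n S w))) *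
      (qSeq S s l0 / qD S w l0)

lemma mul_sensitivity (ht : 2 ≤ t) (hx : 0 < qD S w (xD n S w)) (hl : 0 < qD S w l0)
    (s : TrtSeq p t) :
    ((qD S w (xD n S w))⁻¹ + (t - 2) * (qD S w l0)⁻¹) * sensitivity n S w l0 s =
      (qD S w (xD n S w))⁻¹ ^ 2 * qSeq S s (xD n S w) +
        (t - 2) * (qD S w l0)⁻¹ ^ 2 * qSeq S s l0 := by
  have ht2 : (0 : ℝ) ≤ t - 2 := sub_nonneg.mpr (by exact_mod_cast ht)
  rw [sensitivity]
  generalize qD S w (xD n S w) = X at *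
  generalize qD S w l0 = L at *
  field_simp
  ring

lemma mul_sum_sensitivity (ht : 2 ≤ t) (hx : 0 < qD S w (xD n S w)) (hl : 0 < qD S w l0)
    (v : TrtSeq p t → ℝ) :
    ((qD S w (xD n S w))⁻¹ + (t - 2) * (qD S w l0)⁻¹) * ∑ s, v s * sensitivity n S w l0 s =
      (qD S w (xD n S w))⁻¹ ^ 2 * qD S v (xD n S w) +
        (t - 2) * (qD S w l0)⁻¹ ^ 2 * qD S v l0 := by
  rw [qD.eq_def S v, qD.eq_def S v, Finset.mul_sum, Finset.mul_sum, Finset.mul_sum,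
    ← Finset.sum_add_distrib]
  refine Finset.sum_congr rfl fun s _ => ?_
  rw [mul_left_comm, mul_sensitivity ht hx hl]
  ring

lemma inv_add_sub_two_mul_inv_pos (ht : 2 ≤ t) {X L : ℝ} (hX : 0 < X) (hL : 0 < L) :
    0 < X⁻¹ + (t - 2) * L⁻¹ := by
  have ht2 : (0 : ℝ) ≤ t - 2 := sub_nonneg.mpr (by exact_mod_cast ht)
  positivity

lemma sum_mul_sensitivity_self (ht : 2 ≤ t) (hx : 0 < qD S w (xD n S w)) (hl : 0 < qD S w l0) :
    ∑ s, w s * sensitivity n S w l0 s = 1 := by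
  refine mul_left_cancel₀ (inv_add_sub_two_mul_inv_pos ht hx hl).ne' ?_
  rw [mul_sum_sensitivity ht hx hl]
  field_simp

lemma phiOptimal_of_sensitivity_le_one (hS : S.PosDef) (hg : IsIsotropicPrior g)
    (hw : IsBalanced n S w) (hc : 0 < cD n S w 1 1) (hx : 0 < qD S w (xD n S w))
    (hsens : ∀ s, sensitivity n S w l0 s ≤ 1) : PhiOptimal n S PhiA g l0 w := by
  intro v hv
  have hl := hx.trans_le (qD_xD_le hS hc l0)
  have hK := inv_add_sub_two_mul_inv_pos hg.two_le hx hl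
  have hbound := PhiCrit_mul_sq_le hS hg hv (xD n S w) (qD S w (xD n S w))⁻¹ (qD S w l0)⁻¹
  have hsum := mul_sum_sensitivity (n := n) hg.two_le hx hl v
  rw [hw.phiCrit_eq hS hg hc hx, ← div_eq_mul_inv, le_div_iff₀ hK]
  refine le_of_mul_le_mul_right ?_ hK
  calc _ = PhiCrit n S PhiA g l0 v * ((qD S w (xD n S w))⁻¹ + (t - 2) * (qD S w l0)⁻¹) ^ 2 := by
        ring
    _ ≤ n * (((qD S w (xD n S w))⁻¹ + (t - 2) * (qD S w l0)⁻¹) *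
          ∑ s, v s * sensitivity n S w l0 s) := by
        rw [hsum]
        exact hbound.trans_eq (by ring)
    _ ≤ n * (((qD S w (xD n S w))⁻¹ + (t - 2) * (qD S w l0)⁻¹) * 1) := by
        gcongr
        exact sum_mul_le_of_mem_stdSimplex hv.1 hsens
    _ = _ := by rw [mul_one]

lemma hasDerivAt_cD_lineMap (n : ℕ) (S : Matrix (Fin p) (Fin p) ℝ) (w u : TrtSeq p t → ℝ)
    (i j : Fin 2) (e : ℝ) : HasDerivAt (fun e : ℝ => cD n S (AffineMap.lineMap w u e) i j)
      (cD n S u i j - cD n S w i j) e := by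
  simp only [cD_lineMap]
  exact AffineMap.hasDerivAt_lineMap

lemma hasDerivAt_qD_lineMap (S : Matrix (Fin p) (Fin p) ℝ) (w u : TrtSeq p t → ℝ) (y e : ℝ) :
    HasDerivAt (fun e : ℝ => qD S (AffineMap.lineMap w u e) y) (qD S u y - qD S w y) e := by
  simp only [qD_lineMap]
  exact AffineMap.hasDerivAt_lineMap

-- Envelope theorem: since `xD` minimises `qD S w`, its own variation does not contribute.
lemma hasDerivAt_qD_xD_lineMap (hS : S.PosDef) (hc : cD n S w 1 1 ≠ 0) (u : TrtSeq p t → ℝ) :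
    HasDerivAt (fun e : ℝ => qD S (AffineMap.lineMap w u e) (xD n S (AffineMap.lineMap w u e)))
      (qD S u (xD n S w) - qD S w (xD n S w)) 0 := by
  have hn := (natCast_pos_of_cD_ne_zero hc).ne'
  have hschur : ∀ v : TrtSeq p t → ℝ, qD S v (xD n S v) =
      (cD n S v 0 0 - cD n S v 0 1 ^ 2 / cD n S v 1 1) / n := fun v => by
    rw [eq_div_iff hn, mul_comm, natCast_mul_qD_xD n hS]
  have hc0 : cD n S (AffineMap.lineMap w u (0 : ℝ)) 1 1 ≠ 0 := by
    rwa [AffineMap.lineMap_apply_zero]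
  simp only [hschur (AffineMap.lineMap w u _)]
  refine (((hasDerivAt_cD_lineMap n S w u 0 0 0).sub
    (((hasDerivAt_cD_lineMap n S w u 0 1 0).pow 2).div
      (hasDerivAt_cD_lineMap n S w u 1 1 0) hc0)).div_const (n : ℝ)).congr_deriv ?_
  rw [div_eq_iff hn, sub_mul, mul_comm _ (n : ℝ), mul_comm _ (n : ℝ), natCast_mul_qD n hS,
    natCast_mul_qD_xD n hS, xD]
  simp only [Pi.pow_apply, AffineMap.lineMap_apply_zero]
  generalize cD n S w 1 1 = c at *
  field_simp
  ring

lemma eventually_isBalanced_lineMap (hS : S.PosDef) (hw : IsBalanced n S w) (hu : IsBalanced n S u)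
    (hc : 0 < cD n S w 1 1) (hx : 0 < qD S w (xD n S w)) :
    ∀ᶠ e in nhdsWithin (0 : ℝ) (Set.Ici 0), IsBalanced n S (AffineMap.lineMap w u e) ∧
      0 < cD n S (AffineMap.lineMap w u e) 1 1 ∧
      0 < qD S (AffineMap.lineMap w u e) (xD n S (AffineMap.lineMap w u e)) := by
  have hcpos := (hasDerivAt_cD_lineMap n S w u 1 1 0).continuousAt.eventually_const_lt
    (u := 0) (by simpa only [AffineMap.lineMap_apply_zero] using hc)
  have hxpos := (hasDerivAt_qD_xD_lineMap hS hc.ne' u).continuousAt.eventually_const_lt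
    (u := 0) (by simpa only [AffineMap.lineMap_apply_zero] using hx)
  filter_upwards [Icc_mem_nhdsGE one_pos, hcpos.filter_mono nhdsWithin_le_nhds,
    hxpos.filter_mono nhdsWithin_le_nhds] with e he hce hxe
  exact ⟨(convex_setOf_isBalanced n S).lineMap_mem hw hu he, hce, hxe⟩

lemma derivative_nonneg_of_isLocalMinOn_Ici {f : ℝ → ℝ} {f' a : ℝ} (hf : HasDerivAt f f' a)
    (hmin : IsLocalMinOn f (Set.Ici a) a) : 0 ≤ f' := by
  have hone : (1 : ℝ) ∈ posTangentConeAt (Set.Ici a) a :=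
    mem_posTangentConeAt_of_segment_subset
      ((convex_Ici a).segment_subset Set.self_mem_Ici (by simp))
  simpa using hmin.hasFDerivWithinAt_nonneg hf.hasFDerivAt.hasFDerivWithinAt hone

lemma isLocalMinOn_of_phiOptimal (hS : S.PosDef) (hg : IsIsotropicPrior g)
    (hw : IsBalanced n S w) (hu : IsBalanced n S u) (hc : 0 < cD n S w 1 1)
    (hx : 0 < qD S w (xD n S w)) (hopt : PhiOptimal n S PhiA g l0 w) :
    IsLocalMinOn (fun e : ℝ =>
      (qD S (AffineMap.lineMap w u e) (xD n S (AffineMap.lineMap w u e)))⁻¹ +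
        (t - 2) * (qD S (AffineMap.lineMap w u e) l0)⁻¹) (Set.Ici 0) 0 := by
  filter_upwards [eventually_isBalanced_lineMap hS hw hu hc hx] with e ⟨hbal, hce, hxe⟩
  have hK := inv_add_sub_two_mul_inv_pos hg.two_le hx (hx.trans_le (qD_xD_le hS hc l0))
  have hKe := inv_add_sub_two_mul_inv_pos hg.two_le hxe (hxe.trans_le (qD_xD_le hS hce l0))
  have hle := hopt _ (hbal.phiAdmissible hS hg hce hxe)
  rw [hbal.phiCrit_eq hS hg hce hxe, hw.phiCrit_eq hS hg hc hx] at hle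
  rw [AffineMap.lineMap_apply_zero]
  exact (inv_le_inv₀ hKe hK).mp (le_of_mul_le_mul_left hle (natCast_pos_of_cD_ne_zero hc.ne'))

lemma sum_mul_sensitivity_le_one (hS : S.PosDef) (hg : IsIsotropicPrior g)
    (hw : IsBalanced n S w) (hu : IsBalanced n S u) (hc : 0 < cD n S w 1 1)
    (hx : 0 < qD S w (xD n S w)) (hopt : PhiOptimal n S PhiA g l0 w) :
    ∑ s, u s * sensitivity n S w l0 s ≤ 1 := by
  have hl := hx.trans_le (qD_xD_le hS hc l0)
  have hderiv := ((hasDerivAt_qD_xD_lineMap hS hc.ne' u).inv (by simpa using hx.ne')).add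
    (((hasDerivAt_qD_lineMap S w u l0 0).inv (by simpa using hl.ne')).const_mul ((t : ℝ) - 2))
  have hnonneg := derivative_nonneg_of_isLocalMinOn_Ici hderiv
    (isLocalMinOn_of_phiOptimal hS hg hw hu hc hx hopt)
  simp only [AffineMap.lineMap_apply_zero] at hnonneg
  refine le_of_mul_le_mul_left ?_ (inv_add_sub_two_mul_inv_pos hg.two_le hx hl)
  rw [mul_sum_sensitivity hg.two_le hx hl u, mul_one, ← sub_nonneg]
  refine hnonneg.trans_eq ?_
  generalize qD S w (xD n S w) = X at *
  generalize qD S w l0 = L at *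
  field_simp
  ring

lemma sensitivity_le_one (hS : S.PosDef) (hg : IsIsotropicPrior g)
    (hw : IsBalanced n S w) (hc : 0 < cD n S w 1 1) (hx : 0 < qD S w (xD n S w))
    (hopt : PhiOptimal n S PhiA g l0 w) (s : TrtSeq p t) : sensitivity n S w l0 s ≤ 1 := by
  have hsingle : IsDesign (Pi.single s 1 : TrtSeq p t → ℝ) := single_mem_stdSimplex ℝ s
  have hle := sum_mul_sensitivity_le_one hS hg hw
    ((isSymmetricDesign_symmetrize _).isBalanced hsingle.symmetrize hg.two_le n S) hc hx hopt
  rw [sum_symmetrize_mul _ fun σ s => by simp only [sensitivity, qSeq_permSeq]] at hle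
  simpa [Pi.single_apply] using hle

theorem stmt13_general (hS : S.PosDef) (hg : IsIsotropicPrior g) (hw : IsDesign w)
    (hps : IsPseudoSymmetric n S w) (hc : 0 < cD n S w 1 1) (hx : 0 < qD S w (xD n S w)) :
    (PhiOptimal n S PhiA g l0 w ↔ sSup (Set.range (sensitivity n S w l0)) = 1) ∧
      (PhiOptimal n S PhiA g l0 w → ∀ s, 0 < w s → sensitivity n S w l0 s = 1) := by
  have hbal := hps.isBalanced hg.two_le hw
  have hmean := sum_mul_sensitivity_self hg.two_le hx (hx.trans_le (qD_xD_le hS hc l0))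
  have hopt : PhiOptimal n S PhiA g l0 w → ∀ s, sensitivity n S w l0 s ≤ 1 :=
    sensitivity_le_one hS hg hbal hc hx
  refine ⟨?_, fun h s hs => eq_of_mem_stdSimplex_of_sum_mul_eq hw hmean (hopt h) hs⟩
  rw [sSup_range_eq_iff_of_mem_stdSimplex hw hmean]
  exact ⟨hopt, phiOptimal_of_sensitivity_le_one hS hg hbal hc hx⟩

end Equivalence

/-- equivalence theorem for the A-criterion. -/
theorem stmt13 (p t n : ℕ) (hp : 2 ≤ p) (ht : 3 ≤ t) (hn : 1 ≤ n)
    (S : Matrix (Fin p) (Fin p) ℝ) (hS : S.PosDef)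
    (l0 : ℝ) (g : Measure (Fin t → ℝ)) (hg : IsExchangeablePrior g)
    (w : TrtSeq p t → ℝ) (hw : IsDesign w) (hps : IsPseudoSymmetric n S w)
    (hc22 : 0 < cD n S w 1 1)
    (hq1 : 0 < qD S w (xD n S w)) (hq2 : 0 < qD S w l0) :
    (PhiOptimal n S PhiA g l0 w ↔
      sSup (Set.range fun s : TrtSeq p t =>
        (qD S w l0 / (qD S w l0 + ((t : ℝ) - 2) * qD S w (xD n S w))) *
            (qSeq S s (xD n S w) / qD S w (xD n S w)) +
          (1 - qD S w l0 / (qD S w l0 + ((t : ℝ) - 2) * qD S w (xD n S w))) *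
            (qSeq S s l0 / qD S w l0)) = 1) ∧
    (PhiOptimal n S PhiA g l0 w → ∀ s : TrtSeq p t, 0 < w s →
      (qD S w l0 / (qD S w l0 + ((t : ℝ) - 2) * qD S w (xD n S w))) *
          (qSeq S s (xD n S w) / qD S w (xD n S w)) +
        (1 - qD S w l0 / (qD S w l0 + ((t : ℝ) - 2) * qD S w (xD n S w))) *
          (qSeq S s l0 / qD S w l0) = 1) :=
  stmt13_general hS hg.isIsotropicPrior hw hps hc22 hq1
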